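/- arXiv:2205.07498 — 2 statements merged into one kernel-verified Lean document; each statement's English description precedes it below -/
import Mathlib

section
/- Every 6-edge-connected graph G is ℤ₃-connected; that is, for every ℤ₃-boundary β for G, the ℤ₃-bordered graph (G, β) has a nowhere-zero flow. -/
/-!
The proof is an induction in the style of Lovász, Thomassen, Wu and Zhang, run on a class of
multigraphs with a root where the assumption on the cuts depends on the boundary.

An orientation of `n` parallel edges may have any net value modulo 3 as soon as `2 ≤ n`, so a
solution is recorded by one net value per pair of vertices, constrained only when the multiplicity
is 0 or 1 (`Adm`). For a graph this is the same as a nowhere-zero flow. To a set `A` with `d`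
boundary edges and prescribed net outflow `z` belongs its excess `t A ≤ 3`, the least absolute value
of an integer congruent to `d` modulo 2 and to `z` modulo 3. The induction treats multigraphs with a
root whose edges already carry values; the root has degree at most `4 + t`, and every other proper
cut has size at least `4 + t` (`Rooted.Valid`). A 6-edge-connected graph with an additional isolated
root is such an instance: a cut of size at least 7 is large enough because `t ≤ 3`, and a cut of
size 6 has even excess, hence excess at most 2.

Let an instance without solution be minimal, first in the number of vertices and then in the number
of edges.

* A proper set `A` with at least two elements and `cut A = 4 + t A` can be contracted, and the
  solution is then extended into `A` by merging the outside of `A` into the root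
  (`contract_solve`). As `t` has the parity of the cut, all proper sets with at least two elements
  therefore have `cut A ≥ 6 + t A`.
* A vertex of degree 4 with zero net outflow is removed by splitting off its edges in pairs
  (`solve_lift`).
* Assigning a value to an edge and deleting it changes every excess by at most one, so larger sets
  tolerate it. Hence no edge has both ends accepting this (`solve_delete`), and similarly for root
  edges (`solve_delete_root`). A computation with the excess shows that every vertex accepts at
  least one of the values `1`, `-1`, and that it accepts only one of them precisely when its degree
  is `4 + τ` and its net outflow is `τ` (or `-τ`), with `τ` equal to 1 or 2 (`acc_cases`).
* If both signs occurred, the vertices would split into two classes without an edge between them,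
  and the root degree would be at least 8, more than `4 + t` allows. So up to negation all vertices
  have degree `4 + τ` and net outflow `τ`.
* In this last case a vertex `x` is merged into the root after deleting none, one or two of its
  edges (`merge_delete`, `solve_positive`). When two edges are deleted, one of them ends in a
  maximal set `A` that could not lose two edges and the other outside `A`; every larger set can
  afford the loss, and contracting `A` if it has at least two elements avoids the sets crossing `A`.
-/

open scoped Classical

section FlowDefs

variable {V : Type} [Fintype V] [DecidableEq V] {A : Type} [AddCommGroup A]

/-- `β` is an `A`-boundary for `G`: its values sum to zero on every connected component. -/
def IsBoundary (G : SimpleGraph V) (β : V → A) : Prop :=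
  ∀ x : V, ∑ v ∈ Finset.univ.filter (fun v => G.Reachable v x), β v = 0

/-- `(G, β)` has a nowhere-zero flow: an antisymmetric function on ordered adjacent pairs,
never zero on edges, whose out-sum at each vertex `u` is `β u`. -/
def HasNZFlow (G : SimpleGraph V) (β : V → A) : Prop :=
  ∃ f : V → V → A,
    (∀ u v, G.Adj u v → f u v = - f v u) ∧
    (∀ u v, G.Adj u v → f u v ≠ 0) ∧
    (∀ u : V, ∑ v ∈ Finset.univ.filter (fun v => G.Adj u v), f u v = β u)

/-- `(G, β)/P` has a nowhere-zero flow, where the partition `P` of `V(G)` is given as a setoid: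
an antisymmetric, nowhere-zero function on the ordered adjacent pairs lying in distinct parts,
such that for every part, the sum of the values leaving the part is the sum of `β` on it. -/
def HasNZFlowQuot (G : SimpleGraph V) (β : V → A) (P : Setoid V) : Prop :=
  ∃ f : V → V → A,
    (∀ u v, G.Adj u v → ¬ P.r u v → f u v = - f v u) ∧
    (∀ u v, G.Adj u v → ¬ P.r u v → f u v ≠ 0) ∧
    (∀ x : V,
      ∑ u ∈ Finset.univ.filter (fun u => P.r u x),
        ∑ v ∈ Finset.univ.filter (fun v => G.Adj u v ∧ ¬ P.r u v), f u v
      = ∑ v ∈ Finset.univ.filter (fun v => P.r v x), β v)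

/-- The partition `P` is `G`-connected: every part induces a connected subgraph of `G`. -/
def PartsConnected (G : SimpleGraph V) (P : Setoid V) : Prop :=
  ∀ x : V, (G.induce {v | P.r v x}).Connected

/-- `(G, β)` is a flow-critical `A`-bordered graph: `β` is an `A`-boundary, `G` is connected,
`(G, β)` has no nowhere-zero flow, but `(G, β)/P` has one for every `G`-connected partition `P`
with at least one part of size at least two. -/
def FlowCritical (G : SimpleGraph V) (β : V → A) : Prop :=
  IsBoundary G β ∧ G.Connected ∧ ¬ HasNZFlow G β ∧
  ∀ P : Setoid V, PartsConnected G P → (∃ x y : V, x ≠ y ∧ P.r x y) →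
    HasNZFlowQuot G β P

end FlowDefs

/-- The number of edges of `G` with exactly one end in `X` (each such edge counted once,
as the ordered pair oriented from `X` outwards). -/
noncomputable def cutSize {V : Type} [Fintype V] (G : SimpleGraph V) (X : Finset V) : ℕ :=
  (Finset.univ.filter (fun p : V × V => G.Adj p.1 p.2 ∧ p.1 ∈ X ∧ p.2 ∉ X)).card

/-- `G` is `k`-edge-connected: at least two vertices, and every edge-cut has at least `k` edges. -/
def EdgeConnected {V : Type} [Fintype V] (G : SimpleGraph V) (k : ℕ) : Prop :=
  2 ≤ Fintype.card V ∧ ∀ X : Finset V, X.Nonempty → X ≠ Finset.univ → k ≤ cutSize G X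


/-! ### Net values of parallel edges -/

/-- `Adm n z`: some orientation of `n` parallel edges has net value `z` modulo 3. Only `n = 0`
and `n = 1` constrain `z`, since two parallel edges can realise every residue. -/
def Adm (n : ℕ) (z : ZMod 3) : Prop := (n = 0 → z = 0) ∧ (n = 1 → z ≠ 0)

lemma zmod3_cases (z : ZMod 3) : z = 0 ∨ z = 1 ∨ z = 2 := by
  revert z; decide

lemma adm_zero : Adm 0 0 := ⟨fun _ => rfl, fun h => absurd h (by norm_num)⟩

lemma adm_one {z : ZMod 3} (hz : z ≠ 0) : Adm 1 z := ⟨fun h => absurd h (by norm_num), fun _ => hz⟩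

lemma adm_of_two_le {n : ℕ} (hn : 2 ≤ n) (z : ZMod 3) : Adm n z :=
  ⟨fun h => by omega, fun h => by omega⟩

lemma Adm.neg {n : ℕ} {z : ZMod 3} (h : Adm n z) : Adm n (-z) :=
  ⟨fun hn => by rw [h.1 hn, neg_zero], fun hn => neg_ne_zero.mpr (h.2 hn)⟩

lemma Adm.add {a c : ℕ} {x y : ZMod 3} (hx : Adm a x) (hy : Adm c y) : Adm (a + c) (x + y) := by
  refine ⟨fun h => ?_, fun h => ?_⟩
  · rw [hx.1 (by omega), hy.1 (by omega), add_zero]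
  · rcases Nat.eq_zero_or_pos a with ha | ha
    · rw [hx.1 ha, zero_add]; exact hy.2 (by omega)
    · rw [hy.1 (by omega), add_zero]; exact hx.2 (by omega)

lemma adm_sum {ι : Type} (s : Finset ι) (n : ι → ℕ) (g : ι → ZMod 3)
    (h : ∀ i ∈ s, Adm (n i) (g i)) : Adm (∑ i ∈ s, n i) (∑ i ∈ s, g i) := by
  induction s using Finset.induction_on with
  | empty => simpa using adm_zero
  | insert a s ha ih =>
    rw [Finset.sum_insert ha, Finset.sum_insert ha]
    exact (h a (Finset.mem_insert_self _ _)).add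
      (ih fun i hi => h i (Finset.mem_insert_of_mem hi))

lemma adm_split {a c : ℕ} {z : ZMod 3} (h : Adm (a + c) z) :
    ∃ x y, Adm a x ∧ Adm c y ∧ x + y = z := by
  rcases Nat.eq_zero_or_pos a with rfl | ha
  · exact ⟨0, z, adm_zero, by simpa using h, zero_add z⟩
  rcases Nat.eq_zero_or_pos c with rfl | hc
  · exact ⟨z, 0, by simpa using h, adm_zero, add_zero z⟩
  have key : ∀ z : ZMod 3, ∃ x y : ZMod 3, x ≠ 0 ∧ y ≠ 0 ∧ x + y = z := by decide
  obtain ⟨x, y, hx, hy, hxy⟩ := key z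
  exact ⟨x, y, ⟨fun h => by omega, fun _ => hx⟩, ⟨fun h => by omega, fun _ => hy⟩, hxy⟩

/-- A net value admissible for a bundle of edges can be distributed over any partition of the
bundle. -/
lemma adm_distrib {ι : Type} (s : Finset ι) (n : ι → ℕ) (z : ZMod 3) (h : Adm (∑ i ∈ s, n i) z) :
    ∃ g : ι → ZMod 3, (∀ i ∈ s, Adm (n i) (g i)) ∧ ∑ i ∈ s, g i = z := by
  induction s using Finset.induction_on generalizing z with
  | empty => exact ⟨0, by simp, by simpa using (h.1 rfl).symm⟩
  | insert a s ha ih =>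
    rw [Finset.sum_insert ha] at h
    obtain ⟨x, y, hx, hy, hxy⟩ := adm_split h
    obtain ⟨g, hg, hs⟩ := ih y hy
    refine ⟨Function.update g a x, fun i hi => ?_, ?_⟩
    · by_cases hia : i = a
      · subst hia; simpa using hx
      · rw [Function.update_of_ne hia]
        exact hg i ((Finset.mem_insert.mp hi).resolve_left hia)
    · rw [Finset.sum_insert ha, Function.update_self, ← hxy, ← hs]
      congr 1
      exact Finset.sum_congr rfl fun i hi =>
        Function.update_of_ne (by rintro rfl; exact ha hi) _ _

/-! ### The excess function -/

/-- The least `|τ|` over integers `τ` with `τ ≡ d` modulo 2 and `τ ≡ z` modulo 3: the least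
possible imbalance of a set with `d` boundary edges and prescribed net outflow `z`. -/
def excess (d : ℕ) (z : ZMod 3) : ℕ := if z = 0 then 3 * (d % 2) else 2 - d % 2

lemma excess_zero (d : ℕ) : excess d 0 = 3 * (d % 2) := by simp [excess]
lemma excess_one (d : ℕ) : excess d 1 = 2 - d % 2 := by
  rw [excess, if_neg (by decide)]
lemma excess_two (d : ℕ) : excess d 2 = 2 - d % 2 := by
  rw [excess, if_neg (by decide)]

lemma excess_neg (d : ℕ) (z : ZMod 3) : excess d (-z) = excess d z := by
  simp [excess]

lemma excess_le (d : ℕ) (z : ZMod 3) : excess d z ≤ 3 := by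
  unfold excess; split_ifs <;> omega

lemma excess_mod (d : ℕ) (z : ZMod 3) : excess d z % 2 = d % 2 := by
  unfold excess; split_ifs <;> omega

lemma excess_parity {d d' : ℕ} (h : d % 2 = d' % 2) (z : ZMod 3) : excess d z = excess d' z := by
  unfold excess; rw [h]

lemma excess_subadd {d d₁ d₂ k : ℕ} (h : d + 2 * k = d₁ + d₂) (z₁ z₂ : ZMod 3) :
    excess d (z₁ + z₂) ≤ excess d₁ z₁ + excess d₂ z₂ := by
  rcases zmod3_cases z₁ with rfl | rfl | rfl <;> rcases zmod3_cases z₂ with rfl | rfl | rfl <;>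
    simp only [add_zero, zero_add, excess_zero, excess_one, excess_two,
      show (1 : ZMod 3) + 1 = 2 by decide, show (1 : ZMod 3) + 2 = 0 by decide,
      show (2 : ZMod 3) + 1 = 0 by decide, show (2 : ZMod 3) + 2 = 1 by decide] <;> omega

/-- Removing one boundary edge changes the excess by at most one. -/
lemma excess_step {d d' : ℕ} (h : d' + 1 = d) (z : ZMod 3) {e : ZMod 3} (he : e ≠ 0) :
    excess d' (z - e) ≤ excess d z + 1 ∧ excess d z ≤ excess d' (z - e) + 1 := by
  rcases zmod3_cases z with rfl | rfl | rfl <;> rcases zmod3_cases e with rfl | rfl | rfl <;>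
    first
    | exact absurd rfl he
    | (simp only [excess_zero, excess_one, excess_two,
        show (0 : ZMod 3) - 1 = 2 by decide, show (0 : ZMod 3) - 2 = 1 by decide,
        show (1 : ZMod 3) - 1 = 0 by decide, show (1 : ZMod 3) - 2 = 2 by decide,
        show (2 : ZMod 3) - 1 = 1 by decide, show (2 : ZMod 3) - 2 = 0 by decide]
       omega)

/-! ### Rooted instances and their cuts -/

section Instances

set_option linter.unusedSectionVars false

variable {V : Type} [DecidableEq V]

/-- A multigraph with one distinguished root vertex, together with a flow problem on it. The root
is not an element of `V`: `S` is the set of the other vertices, `m u v` counts the edges between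
distinct `u` and `v` (the diagonal of `m` is never used), `r v` counts the edges from the root to
`v`, and `h v` is the net value already assigned to these root edges, directed towards `v`. A
solution has net outflow `b v` at `v` along the edges inside `S`. -/
structure Rooted (V : Type) where
  S : Finset V
  m : V → V → ℕ
  r : V → ℕ
  h : V → ZMod 3
  b : V → ZMod 3

/-- The multigraph `m` on `S` has an orientation with net outflow `b v` modulo 3 at each `v`:
`f u v` is the net value of the parallel edges from `u` to `v`. -/
def HasFlow (S : Finset V) (m : V → V → ℕ) (b : V → ZMod 3) : Prop :=
  ∃ f : V → V → ZMod 3, (∀ u v, f u v = - f v u) ∧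
    (∀ u ∈ S, ∀ v ∈ S, u ≠ v → Adm (m u v) (f u v)) ∧ ∀ u ∈ S, ∑ v ∈ S, f u v = b u

/-- The indicator of a single edge between `p` and `q`, as a symmetric multiplicity function (with
value 2 at `(p, p)` when `p = q`). -/
def edge (p q x y : V) : ℕ :=
  (if x = p ∧ y = q then 1 else 0) + (if x = q ∧ y = p then 1 else 0)


namespace Rooted

/-- The number of edges leaving `A`, counting those to the root. -/
def cut (I : Rooted V) (A : Finset V) : ℕ :=
  ∑ u ∈ A, ∑ v ∈ I.S \ A, I.m u v + ∑ u ∈ A, I.r u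

/-- The net outflow of `A`, counting the edges to the root. -/
def bd (I : Rooted V) (A : Finset V) : ZMod 3 := ∑ u ∈ A, (I.b u - I.h u)

/-- The excess of `A`. -/
def t (I : Rooted V) (A : Finset V) : ℕ := excess (I.cut A) (I.bd A)

/-- Basic consistency of an instance. -/
structure WF (I : Rooted V) : Prop where
  symm : ∀ u v, I.m u v = I.m v u
  adm : ∀ v ∈ I.S, Adm (I.r v) (I.h v)
  sum : ∑ v ∈ I.S, I.b v = 0

/-- The hypotheses under which the induction runs: the root has degree at most `4 + t`, every
other proper cut has size at least `4 + t`. -/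
structure Valid (I : Rooted V) : Prop extends WF I where
  two : 2 ≤ I.S.card
  root : I.cut I.S ≤ 4 + I.t I.S
  cuts : ∀ A ⊆ I.S, A.Nonempty → A ≠ I.S → 4 + I.t A ≤ I.cut A

end Rooted

lemma edge_symm (p q x y : V) : edge p q x y = edge p q y x := by
  unfold edge
  simp only [and_comm (a := y = p), and_comm (a := y = q)]
  exact add_comm _ _

lemma sum_edge {S A : Finset V} {p q : V} (hp : p ∈ S) (hq : q ∈ S) :
    ∑ x ∈ A, ∑ y ∈ S \ A, edge p q x y =
      (if p ∈ A ∧ q ∉ A then 1 else 0) + (if q ∈ A ∧ p ∉ A then 1 else 0) := by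
  have key : ∀ p q : V, q ∈ S → ∑ x ∈ A, ∑ y ∈ S \ A, (if x = p ∧ y = q then 1 else 0) =
      if p ∈ A ∧ q ∉ A then 1 else 0 := by
    intro p q hq
    simp only [ite_and]
    by_cases hpA : p ∈ A
    · rw [Finset.sum_eq_single_of_mem p hpA]
      · simp [hpA, hq]
      · intro x _ hx; simp [hx]
    · rw [Finset.sum_eq_zero]
      · simp [hpA]
      · intro x hx
        have : x ≠ p := fun e => hpA (e ▸ hx)
        simp [this]
  simp only [edge, Finset.sum_add_distrib]
  rw [key p q hq, key q p hp]

namespace Rooted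

variable {I J : Rooted V} {A B : Finset V} {u v x y : V}

lemma bd_union (h : Disjoint A B) : I.bd (A ∪ B) = I.bd A + I.bd B := Finset.sum_union h

lemma bd_singleton : I.bd {v} = I.b v - I.h v := Finset.sum_singleton _ _

lemma cut_S : I.cut I.S = ∑ v ∈ I.S, I.r v := by simp [cut]

lemma cut_union (hI : I.WF) (hA : A ⊆ I.S) (hB : B ⊆ I.S) (h : Disjoint A B) :
    I.cut (A ∪ B) + 2 * ∑ u ∈ A, ∑ v ∈ B, I.m u v = I.cut A + I.cut B := by
  have e1 : I.S \ A = B ∪ I.S \ (A ∪ B) := by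
    ext z; have := @hB z; have : z ∈ B → z ∉ A := fun hz => Finset.disjoint_right.mp h hz
    simp only [Finset.mem_sdiff, Finset.mem_union]; tauto
  have e2 : I.S \ B = A ∪ I.S \ (A ∪ B) := by
    ext z; have := @hA z; have : z ∈ B → z ∉ A := fun hz => Finset.disjoint_right.mp h hz
    simp only [Finset.mem_sdiff, Finset.mem_union]; tauto
  have d1 : Disjoint B (I.S \ (A ∪ B)) :=
    Finset.disjoint_sdiff.mono_left Finset.subset_union_right
  have d2 : Disjoint A (I.S \ (A ∪ B)) :=
    Finset.disjoint_sdiff.mono_left Finset.subset_union_left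
  have e3 : ∑ u ∈ B, ∑ v ∈ A, I.m u v = ∑ u ∈ A, ∑ v ∈ B, I.m u v := by
    rw [Finset.sum_comm]
    exact Finset.sum_congr rfl fun i _ => Finset.sum_congr rfl fun j _ => hI.symm _ _
  unfold cut
  rw [e1, e2]
  simp only [Finset.sum_union d1, Finset.sum_union d2, Finset.sum_union h,
    Finset.sum_add_distrib, e3]
  ring

lemma t_mod : I.t A % 2 = I.cut A % 2 := excess_mod _ _

lemma t_le : I.t A ≤ 3 := excess_le _ _

lemma t_union (hI : I.WF) (hA : A ⊆ I.S) (hB : B ⊆ I.S) (h : Disjoint A B) :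
    I.t (A ∪ B) ≤ I.t A + I.t B := by
  unfold t
  rw [bd_union h]
  exact excess_subadd (cut_union hI hA hB h) _ _

/-- The cut of `A` in an instance whose vertex set contains one more vertex `x`. -/
lemma cut_erase (hx : x ∈ I.S) (hA : A ⊆ I.S.erase x) :
    I.cut A = ∑ u ∈ A, ∑ v ∈ I.S.erase x \ A, I.m u v + ∑ u ∈ A, I.m u x + ∑ u ∈ A, I.r u := by
  have hxA : x ∉ A := fun h => by simpa using hA h
  have : I.S \ A = insert x (I.S.erase x \ A) := by
    ext z
    by_cases hz : z = x
    · subst hz; simp [hx, hxA]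
    · simp [hz]
  unfold cut
  rw [this]
  simp only [Finset.sum_insert (show x ∉ I.S.erase x \ A by simp), Finset.sum_add_distrib]
  ring

lemma cut_singleton : I.cut {x} = ∑ v ∈ I.S.erase x, I.m x v + I.r x := by
  simp [cut, Finset.sdiff_singleton_eq_erase]

/-- `cut_union` for the sets `S \ {x}` and `{x}`, whose union has only root edges as boundary. -/
lemma cut_compl (hI : I.WF) (hx : x ∈ I.S) :
    I.cut (I.S.erase x) + 2 * I.r x = I.cut I.S + I.cut {x} := by
  have h1 := cut_union hI (A := {x}) (B := I.S.erase x) (by simpa using hx)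
    (Finset.erase_subset _ _) (by simp)
  rw [← Finset.insert_eq, Finset.insert_erase hx, Finset.sum_singleton] at h1
  have h2 := I.cut_singleton (x := x)
  omega

end Rooted

/-! ### Transferring flows between instances -/

section Transfer

variable {S : Finset V} {m m' : V → V → ℕ} {b b' : V → ZMod 3}

lemma HasFlow.congr (hf : HasFlow S m b) (hm : ∀ u ∈ S, ∀ v ∈ S, u ≠ v → m u v = m' u v)
    (hb : ∀ u ∈ S, b u = b' u) : HasFlow S m' b' := by
  obtain ⟨f, h1, h2, h3⟩ := hf
  exact ⟨f, h1, fun u hu v hv huv => hm u hu v hv huv ▸ h2 u hu v hv huv,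
    fun u hu => (h3 u hu).trans (hb u hu)⟩

lemma HasFlow.neg (hf : HasFlow S m b) : HasFlow S m (fun v => - b v) := by
  obtain ⟨f, h1, h2, h3⟩ := hf
  refine ⟨fun u v => - f u v, fun u v => by simp only; rw [h1 u v],
    fun u hu v hv huv => (h2 u hu v hv huv).neg, fun u hu => ?_⟩
  rw [Finset.sum_neg_distrib, h3 u hu]

/-- The multiplicity function which agrees with `m` away from `x` and gives `x` the edges `l`. -/
def hub (m : V → V → ℕ) (x : V) (l : V → ℕ) (u v : V) : ℕ :=
  if u = x then l v else if v = x then l u else m u v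

/-- Once the values on the edges at `x` are fixed, it remains to find a flow on the other
vertices. -/
lemma HasFlow.merge {x : V} {l : V → ℕ} {g : V → ZMod 3} (hx : x ∈ S)
    (hg : ∀ u ∈ S.erase x, Adm (l u) (g u)) (hs : ∑ u ∈ S.erase x, g u = b x)
    (hf : HasFlow (S.erase x) m (fun u => b u + g u)) : HasFlow S (hub m x l) b := by
  obtain ⟨f, h1, h2, h3⟩ := hf
  refine ⟨fun u v => if u = x then (if v = x then 0 else g v) else
    if v = x then - g u else f u v, ?_, ?_, ?_⟩
  · intro u v
    by_cases hu : u = x <;> by_cases hv : v = x <;> simp [hu, hv]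
    exact h1 u v
  · intro u hu v hv huv
    unfold hub
    by_cases hux : u = x
    · have hvx : v ≠ x := fun e => huv (hux.trans e.symm)
      simp only [hux, hvx, if_true, if_false]
      exact hg v (Finset.mem_erase.mpr ⟨hvx, hv⟩)
    · by_cases hvx : v = x
      · simp only [hux, hvx, if_true, if_false]
        exact (hg u (Finset.mem_erase.mpr ⟨hux, hu⟩)).neg
      · simp only [hux, hvx, if_false]
        exact h2 u (Finset.mem_erase.mpr ⟨hux, hu⟩) v (Finset.mem_erase.mpr ⟨hvx, hv⟩) huv
  · intro u hu
    rw [← Finset.insert_erase hx, Finset.sum_insert (Finset.notMem_erase _ _)]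
    by_cases hux : u = x
    · subst hux
      simp only [if_true, zero_add]
      rw [← hs]
      exact Finset.sum_congr rfl fun v hv => by rw [if_neg (Finset.ne_of_mem_erase hv)]
    · simp only [hux, if_true, if_false]
      have := h3 u (Finset.mem_erase.mpr ⟨hux, hu⟩)
      rw [Finset.sum_congr rfl fun v hv => by rw [if_neg (Finset.ne_of_mem_erase hv)], this]
      ring

/-- A flow of value `c` along the single edge from `p` to `q`. -/
def unitFlow (p q : V) (c : ZMod 3) (u v : V) : ZMod 3 :=
  (if u = p then (if v = q then c else 0) else 0) - (if u = q then (if v = p then c else 0) else 0)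

lemma unitFlow_neg (p q : V) (c : ZMod 3) (u v : V) :
    unitFlow p q c u v = - unitFlow p q c v u := by
  unfold unitFlow
  rw [neg_sub]
  congr 1
  · by_cases h1 : u = p <;> by_cases h2 : v = q <;> simp only [h1, h2, if_true, if_false]
  · by_cases h1 : u = q <;> by_cases h2 : v = p <;> simp only [h1, h2, if_true, if_false]

lemma unitFlow_sum {p q : V} (hp : p ∈ S) (hq : q ∈ S) (c : ZMod 3) (u : V) :
    ∑ v ∈ S, unitFlow p q c u v = (if u = p then c else 0) - (if u = q then c else 0) := by
  unfold unitFlow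
  rw [Finset.sum_sub_distrib]
  by_cases h1 : u = p <;> by_cases h2 : u = q <;> simp [h1, h2, hp, hq]

/-- Lifting: a flow after replacing the edges `vp`, `vq` by an edge `pq` gives a flow before. -/
lemma HasFlow.lift {v p q : V} {l : V → ℕ} (hm : ∀ x y, m x y = m y x) (hv : v ∈ S) (hp : p ∈ S)
    (hq : q ∈ S) (hpv : p ≠ v) (hqv : q ≠ v)
    (hf : HasFlow S (hub (fun x y => m x y + edge p q x y) v l) b) :
    HasFlow S (hub m v (fun u => l u + (if u = p then 1 else 0) + (if u = q then 1 else 0))) b := by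
  obtain ⟨f, h1, h2, h3⟩ := hf
  rcases eq_or_ne p q with rfl | hpq
  · refine ⟨f, h1, fun u hu w hw huw => ?_, h3⟩
    have := h2 u hu w hw huw
    unfold hub at this ⊢
    by_cases huv : u = v
    · subst huv
      simp only [if_true] at this ⊢
      by_cases hwp : w = p
      · exact adm_of_two_le (by simp [hwp]) _
      · simpa [hwp] using this
    · by_cases hwv : w = v
      · subst hwv
        simp only [if_true, huv, if_false] at this ⊢
        by_cases hwp : u = p
        · exact adm_of_two_le (by simp [hwp]) _
        · simpa [hwp] using this
      · simp only [huv, hwv, if_false, edge] at this ⊢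
        have h : ¬ (u = p ∧ w = p) := fun h => huw (h.1.trans h.2.symm)
        simpa [h] using this
  have hpq' := h2 p hp q hq hpq
  simp only [hub, hpv, hqv, if_false, edge, and_self, if_true, hpq, hpq.symm,
    add_zero] at hpq'
  obtain ⟨a, c, ha, hc, hac⟩ := adm_split hpq'
  -- one unit of the flow from `p` to `q` is rerouted through `v`
  refine ⟨fun u w => f u w + unitFlow p v c u w + unitFlow v q c u w + unitFlow q p c u w,
    fun u w => ?_, ?_, fun u hu => ?_⟩
  · simp only
    rw [h1 u w, unitFlow_neg p v c u w, unitFlow_neg v q c u w, unitFlow_neg q p c u w]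
    ring
  · have hqp' : f q p = -(a + c) := by rw [h1, hac]
    intro u hu w hw huw
    have h := h2 u hu w hw huw
    have hnc := hc.neg
    unfold hub edge at h
    unfold hub unitFlow
    by_cases huv : u = v
    · subst huv
      simp only [if_true, hpv.symm, hqv.symm, if_false] at h ⊢
      by_cases hwp : w = p
      · subst hwp
        simpa [hpq, hpv, sub_eq_add_neg] using h.add hnc
      · by_cases hwq : w = q
        · subst hwq
          simpa [hpq, hpq.symm, hwp, hqv] using h.add hc
        · simpa [hwp, hwq, huw.symm] using h
    · by_cases hwv : w = v
      · subst hwv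
        simp only [if_true, hpv.symm, hqv.symm, huv, if_false] at h ⊢
        by_cases hwp : u = p
        · subst hwp
          simpa [hpq, hpv] using h.add hc
        · by_cases hwq : u = q
          · subst hwq
            simpa [hpq, hpq.symm, hwp, hqv, sub_eq_add_neg] using h.add hnc
          · simpa [hwp, hwq, huw.symm] using h
      · simp only [huv, hwv, if_false] at h ⊢
        by_cases hup : u = p
        · subst hup
          by_cases hwq : w = q
          · subst hwq
            simpa [hpq, hpq.symm, ← hac] using ha
          · simpa [hwq, hpq, huw.symm] using h
        · by_cases huq : u = q
          · subst huq
            by_cases hwp : w = p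
            · subst hwp
              have := ha.neg
              rw [hm] at this
              simpa [hpq, hpq.symm, hqp'] using this
            · simpa [hwp, hpq.symm, huw.symm] using h
          · simpa [hup, huq] using h
  · simp only [Finset.sum_add_distrib]
    rw [h3 u hu, unitFlow_sum hp hv, unitFlow_sum hv hq, unitFlow_sum hq hp]
    ring

/-- Splitting off one edge from a nonempty bundle. -/
lemma exists_peel {l : V → ℕ} (h : 0 < ∑ u ∈ S, l u) : ∃ p ∈ S, ∃ l' : V → ℕ,
    (∀ u, l u = l' u + if u = p then 1 else 0) ∧ ∑ u ∈ S, l u = ∑ u ∈ S, l' u + 1 := by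
  obtain ⟨p, hp, hl⟩ := Finset.exists_ne_zero_of_sum_ne_zero h.ne'
  have key : ∀ u, l u = (l u - if u = p then 1 else 0) + if u = p then 1 else 0 := by
    intro u
    split_ifs with hu
    · subst hu; omega
    · rfl
  refine ⟨p, hp, _, key, ?_⟩
  rw [Finset.sum_congr rfl fun u _ => key u, Finset.sum_add_distrib]
  simp [hp]

end Transfer

/-! ### Contraction -/

section Contraction

variable {S A C D : Finset V} {a : V} {M : Type} [AddCommMonoid M]

/-- The push-forward of `φ` along the contraction of `A` to its element `a`. -/
def con (a : V) (A : Finset V) (φ : V → M) (x : V) : M := if x = a then ∑ u ∈ A, φ u else φ x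

/-- The preimage of `C` under the contraction of `A` to its element `a`. -/
def blow (a : V) (A C : Finset V) : Finset V := if a ∈ C then A ∪ C.erase a else C

lemma sum_con (haA : a ∈ A) (hC : C ⊆ insert a (S \ A)) (φ : V → M) :
    ∑ x ∈ C, con a A φ x = ∑ x ∈ blow a A C, φ x := by
  have hne : ∀ x ∈ C, x ≠ a → x ∉ A := fun x hx hxa =>
    (Finset.mem_sdiff.mp ((Finset.mem_insert.mp (hC hx)).resolve_left hxa)).2
  unfold con blow
  split_ifs with ha
  · have hd : Disjoint A (C.erase a) := Finset.disjoint_right.mpr fun x hx =>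
      hne x (Finset.mem_of_mem_erase hx) (Finset.ne_of_mem_erase hx)
    rw [Finset.sum_union hd, ← Finset.add_sum_erase _ _ ha, if_pos rfl]
    congr 1
    exact Finset.sum_congr rfl fun x hx => if_neg (Finset.ne_of_mem_erase hx)
  · exact Finset.sum_congr rfl fun x hx => if_neg (by rintro rfl; exact ha hx)

lemma con_sum (s : Finset V) (φ : V → V → M) (x : V) :
    con a A (fun u => ∑ y ∈ s, φ u y) x = ∑ y ∈ s, con a A (fun u => φ u y) x := by
  unfold con
  split_ifs
  · exact Finset.sum_comm
  · rfl

lemma con_comm (φ : V → V → M) (x y : V) :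
    con a A (fun u => con a A (φ u) y) x = con a A (fun w => con a A (fun u => φ u w) x) y := by
  unfold con
  split_ifs
  · exact Finset.sum_comm
  all_goals rfl

lemma blow_all (hA : A ⊆ S) (haA : a ∈ A) : blow a A (insert a (S \ A)) = S := by
  unfold blow
  rw [if_pos (Finset.mem_insert_self _ _), Finset.erase_insert (by simp [haA]),
    Finset.union_sdiff_of_subset hA]

lemma blow_subset (hA : A ⊆ S) (hC : C ⊆ insert a (S \ A)) : blow a A C ⊆ S := by
  unfold blow
  split_ifs with ha
  · refine Finset.union_subset hA fun x hx => ?_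
    exact (Finset.mem_sdiff.mp ((Finset.mem_insert.mp (hC (Finset.mem_of_mem_erase hx))).resolve_left
      (Finset.ne_of_mem_erase hx))).1
  · intro x hx
    exact (Finset.mem_sdiff.mp ((Finset.mem_insert.mp (hC hx)).resolve_left
      (by rintro rfl; exact ha hx))).1

lemma blow_sdiff (hA : A ⊆ S) (haA : a ∈ A) (hC : C ⊆ insert a (S \ A)) :
    blow a A (insert a (S \ A) \ C) = S \ blow a A C := by
  ext x
  have h1 := @hA x
  have h2 := @hC x
  have h3 : x = a → x ∈ A := by rintro rfl; exact haA
  have h4 : x = a → (x ∈ C ↔ a ∈ C) := by rintro rfl; rfl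
  unfold blow
  by_cases ha : a ∈ C <;>
    simp only [Finset.mem_sdiff, Finset.mem_insert, Finset.mem_union, Finset.mem_erase,
      ha, true_or, not_true, not_false_iff, and_true, if_true, if_false, and_false] at * <;> tauto

end Contraction

namespace Rooted

variable {I : Rooted V} {A : Finset V}

/-- If the cut of `A` is at most `4 + t A`, then a flow is obtained by
solving the instance where `A` is contracted to a vertex, distributing the resulting values over
the edges leaving `A`, and solving the instance on `A` in which everything outside `A` is merged
into the root. The cut condition is needed only for the sets which survive in one of the two
instances. -/
lemma contract_solve (hI : I.WF)
    (hout : ∀ J : Rooted V, J.S.card < I.S.card → J.Valid → HasFlow J.S J.m J.b)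
    (hA : A ⊆ I.S) (hne : A ≠ I.S) (hA2 : 2 ≤ A.card) (hroot : I.cut I.S ≤ 4 + I.t I.S)
    (hcutA : I.cut A ≤ 4 + I.t A)
    (h1 : ∀ B ⊆ I.S, B.Nonempty → B ≠ I.S → (A ⊆ B ∨ Disjoint A B) → 4 + I.t B ≤ I.cut B)
    (h2 : ∀ B ⊆ A, B.Nonempty → B ≠ A → 4 + I.t B ≤ I.cut B) : HasFlow I.S I.m I.b := by
  obtain ⟨a, haA⟩ : A.Nonempty := Finset.card_pos.mp (by omega)
  have hltA : A.card < I.S.card := Finset.card_lt_card (hA.ssubset_of_ne hne)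
  have hcardc : (I.S \ A).card = I.S.card - A.card := Finset.card_sdiff_of_subset hA
  have haN : a ∉ I.S \ A := by simp [haA]
  -- the contracted instance
  let J : Rooted V :=
    { S := insert a (I.S \ A)
      m := fun x y => con a A (fun u => con a A (I.m u) y) x
      r := con a A I.r
      h := con a A I.h
      b := con a A I.b }
  have hcut : ∀ C ⊆ J.S, J.cut C = I.cut (blow a A C) := by
    intro C hC
    have hin : ∀ x, ∑ y ∈ J.S \ C, J.m x y =
        con a A (fun u => ∑ w ∈ I.S \ blow a A C, I.m u w) x := by
      intro x
      rw [← blow_sdiff hA haA hC]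
      change ∑ y ∈ J.S \ C, con a A (fun u => con a A (I.m u) y) x = _
      rw [← con_sum]
      congr 1
      funext u
      exact sum_con haA (Finset.sdiff_subset : J.S \ C ⊆ J.S) (I.m u)
    unfold cut
    simp only [hin]
    rw [sum_con haA hC, sum_con haA hC]
  have hbd : ∀ C ⊆ J.S, J.bd C = I.bd (blow a A C) := by
    intro C hC
    unfold bd
    rw [Finset.sum_sub_distrib, Finset.sum_sub_distrib]
    rw [sum_con haA hC, sum_con haA hC]
  have ht : ∀ C ⊆ J.S, J.t C = I.t (blow a A C) := fun C hC => by
    unfold t; rw [hcut C hC, hbd C hC]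
  have hJS : blow a A J.S = I.S := blow_all hA haA
  have hJ : J.Valid := by
    refine ⟨⟨fun u v => ?_, fun v hv => ?_, ?_⟩, ?_, ?_, fun C hC hCn hCne => ?_⟩
    · change con a A (fun u => con a A (I.m u) v) u = con a A (fun x => con a A (I.m x) u) v
      rw [con_comm]
      congr 1
      funext w
      congr 1
      funext x
      exact hI.symm _ _
    · change Adm (con a A I.r v) (con a A I.h v)
      unfold con
      split_ifs with hva
      · exact adm_sum _ _ _ fun u hu => hI.adm u (hA hu)
      · exact hI.adm v (Finset.mem_sdiff.mp ((Finset.mem_insert.mp hv).resolve_left hva)).1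
    · change ∑ v ∈ J.S, con a A I.b v = 0
      rw [sum_con haA (Finset.Subset.refl J.S), hJS, hI.sum]
    · change 2 ≤ (insert a (I.S \ A)).card
      rw [Finset.card_insert_of_notMem haN]
      omega
    · rw [hcut _ (Finset.Subset.refl _), ht _ (Finset.Subset.refl _), hJS]
      exact hroot
    · rw [hcut _ hC, ht _ hC]
      refine h1 _ (blow_subset hA hC) ?_ ?_ ?_
      · unfold blow
        split_ifs
        · exact ⟨a, Finset.mem_union_left _ haA⟩
        · exact hCn
      · intro h
        apply hCne
        have h3 : blow a A (J.S \ C) = ∅ := by rw [blow_sdiff hA haA hC, h, Finset.sdiff_self]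
        have h4 : J.S \ C = ∅ := by
          unfold blow at h3
          split_ifs at h3
          · exact absurd (h3 ▸ Finset.mem_union_left _ haA : a ∈ (∅ : Finset V))
              (Finset.notMem_empty _)
          · exact h3
        exact Finset.Subset.antisymm hC (Finset.sdiff_eq_empty_iff_subset.mp h4)
      · unfold blow
        split_ifs with haC
        · exact Or.inl Finset.subset_union_left
        · refine Or.inr (Finset.disjoint_right.mpr fun x hx => ?_)
          exact (Finset.mem_sdiff.mp ((Finset.mem_insert.mp (hC hx)).resolve_left
            (by rintro rfl; exact haC hx))).2
  obtain ⟨f', hf1, hf2, hf3⟩ := hout J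
    (by change (insert a (I.S \ A)).card < _; rw [Finset.card_insert_of_notMem haN]; omega) hJ
  have hsplit : ∀ φ : V → ZMod 3, ∑ x ∈ I.S, φ x = ∑ x ∈ A, φ x + ∑ x ∈ I.S \ A, φ x :=
    fun φ => by rw [add_comm, Finset.sum_sdiff hA]
  -- values on the edges between `A` and its complement
  have hg : ∀ v, ∃ g : V → ZMod 3, v ∈ I.S \ A →
      (∀ u ∈ A, Adm (I.m v u) (g u)) ∧ ∑ u ∈ A, g u = f' v a := by
    intro v
    by_cases hv : v ∈ I.S \ A
    · have hva : v ≠ a := by rintro rfl; exact haN hv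
      have := hf2 v (Finset.mem_insert_of_mem hv) a (Finset.mem_insert_self _ _) hva
      have hm : J.m v a = ∑ u ∈ A, I.m v u := by
        change con a A (fun u => con a A (I.m u) a) v = _
        simp only [con, hva, if_true, if_false]
      rw [hm] at this
      obtain ⟨g, hg⟩ := adm_distrib _ _ _ this
      exact ⟨g, fun _ => hg⟩
    · exact ⟨0, fun h => absurd h hv⟩
  choose g hg using hg
  -- the instance inside `A`
  let K : Rooted V :=
    { S := A
      m := I.m
      r := fun u => I.r u + ∑ v ∈ I.S \ A, I.m v u
      h := fun u => I.h u + ∑ v ∈ I.S \ A, g v u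
      b := fun u => I.b u + ∑ v ∈ I.S \ A, g v u }
  have hKcut : ∀ B ⊆ A, K.cut B = I.cut B := by
    intro B hB
    have e : I.S \ B = (A \ B) ∪ (I.S \ A) := by
      ext x
      have := @hA x
      have := @hB x
      simp only [Finset.mem_union, Finset.mem_sdiff]
      tauto
    have d : Disjoint (A \ B) (I.S \ A) := Finset.disjoint_sdiff.mono_left Finset.sdiff_subset
    unfold cut
    rw [e]
    simp only [Finset.sum_union d, Finset.sum_add_distrib, K]
    have : ∑ u ∈ B, ∑ v ∈ I.S \ A, I.m v u = ∑ u ∈ B, ∑ v ∈ I.S \ A, I.m u v :=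
      Finset.sum_congr rfl fun _ _ => Finset.sum_congr rfl fun _ _ => hI.symm _ _
    rw [this]
    ring
  have hKbd : ∀ B, K.bd B = I.bd B := fun B => by
    unfold bd
    exact Finset.sum_congr rfl fun u _ => by simp only [K]; ring
  have hKt : ∀ B ⊆ A, K.t B = I.t B := fun B hB => by unfold t; rw [hKcut B hB, hKbd B]
  have hfaa : f' a a = 0 := by
    have key : ∀ z : ZMod 3, z = -z → z = 0 := by decide
    exact key _ (hf1 a a)
  have hK : K.Valid := by
    refine ⟨⟨hI.symm, fun u hu => ?_, ?_⟩, hA2, ?_, fun B hB hBn hBne => ?_⟩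
    · exact (hI.adm u (hA hu)).add (adm_sum _ _ _ fun v hv => (hg v hv).1 u hu)
    · change ∑ u ∈ A, (I.b u + ∑ v ∈ I.S \ A, g v u) = 0
      rw [Finset.sum_add_distrib, Finset.sum_comm,
        Finset.sum_congr rfl fun v hv => (hg v hv).2,
        Finset.sum_congr rfl fun v _ => hf1 v a, Finset.sum_neg_distrib]
      have h3 := hf3 a (Finset.mem_insert_self _ _)
      change ∑ v ∈ insert a (I.S \ A), f' a v = con a A I.b a at h3
      rw [Finset.sum_insert haN, hfaa, zero_add] at h3
      rw [h3]
      simp [con]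
    · change K.cut A ≤ 4 + K.t A
      rw [hKcut A (Finset.Subset.refl _), hKt A (Finset.Subset.refl _)]
      exact hcutA
    · rw [hKcut B hB, hKt B hB]
      exact h2 B hB hBn hBne
  obtain ⟨k, hk1, hk2, hk3⟩ := hout K hltA hK
  refine ⟨fun u v => if u ∈ A then (if v ∈ A then k u v else - g v u) else
    if v ∈ A then g u v else f' u v, fun u v => ?_, fun u hu v hv huv => ?_, fun u hu => ?_⟩
  · by_cases huA : u ∈ A <;> by_cases hvA : v ∈ A <;> simp only [huA, hvA, if_true, if_false]
    · exact hk1 u v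
    · rw [neg_neg]
    · exact hf1 u v
  · have hN : ∀ x ∈ I.S, x ∉ A → x ∈ I.S \ A := fun x h h' => Finset.mem_sdiff.mpr ⟨h, h'⟩
    by_cases huA : u ∈ A <;> by_cases hvA : v ∈ A <;> simp only [huA, hvA, if_true, if_false]
    · exact hk2 u huA v hvA huv
    · rw [hI.symm]
      exact ((hg v (hN v hv hvA)).1 u huA).neg
    · exact (hg u (hN u hu huA)).1 v hvA
    · have := hf2 u (Finset.mem_insert_of_mem (hN u hu huA)) v
        (Finset.mem_insert_of_mem (hN v hv hvA)) huv
      have hm : J.m u v = I.m u v := by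
        change con a A (fun u => con a A (I.m u) v) u = _
        have hu' : u ≠ a := by rintro rfl; exact huA haA
        have hv' : v ≠ a := by rintro rfl; exact hvA haA
        simp only [con, hu', hv', if_false]
      rwa [hm] at this
  · rw [hsplit]
    have hn : ∀ v ∈ I.S \ A, v ∉ A := fun v hv => (Finset.mem_sdiff.mp hv).2
    by_cases huA : u ∈ A <;> simp only [huA, if_true, if_false]
    · rw [Finset.sum_congr rfl fun v hv => if_pos hv,
        Finset.sum_congr (s₁ := I.S \ A) rfl fun v hv => if_neg (hn v hv), hk3 u huA,
        Finset.sum_neg_distrib]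
      simp only [K]
      ring
    · have huN : u ∈ I.S \ A := Finset.mem_sdiff.mpr ⟨hu, huA⟩
      rw [Finset.sum_congr rfl fun v hv => if_pos hv,
        Finset.sum_congr (s₁ := I.S \ A) rfl fun v hv => if_neg (hn v hv), (hg u huN).2]
      have h3 := hf3 u (Finset.mem_insert_of_mem huN)
      change ∑ v ∈ insert a (I.S \ A), f' u v = con a A I.b u at h3
      rw [Finset.sum_insert haN] at h3
      rw [h3]
      unfold con
      rw [if_neg (by rintro rfl; exact huA haA)]

end Rooted

namespace Rooted

/-! ### Lifting at a vertex of degree four with zero boundary -/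

variable {I J : Rooted V} {A B : Finset V} {u v x y : V}

/-- Every proper set with at least two elements has slack in its cut condition. -/
def Strict (I : Rooted V) : Prop := ∀ A ⊆ I.S, A ≠ I.S → 2 ≤ A.card → 6 + I.t A ≤ I.cut A

lemma cut_insert (hI : I.WF) (hx : x ∈ I.S) (hA : A ⊆ I.S.erase x) :
    I.cut (insert x A) + 2 * ∑ u ∈ A, I.m x u = I.cut {x} + I.cut A := by
  have hxA : x ∉ A := fun h => by simpa using hA h
  have := cut_union hI (A := {x}) (B := A) (by simpa using hx)
    (hA.trans (Finset.erase_subset _ _)) (by simpa using hxA)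
  rwa [Finset.sum_singleton, ← Finset.insert_eq] at this

lemma bd_insert (hA : A ⊆ I.S.erase x) : I.bd (insert x A) = I.bd {x} + I.bd A := by
  have hxA : x ∉ A := fun h => by simpa using hA h
  rw [Finset.insert_eq, bd_union (by simpa using hxA)]

lemma insert_ne (hA : A ⊆ I.S.erase x) (hne : A ≠ I.S.erase x) : insert x A ≠ I.S := by
  intro h
  have hxA : x ∉ A := fun h => by simpa using hA h
  exact hne (by rw [← h, Finset.erase_insert hxA])

lemma bd_eq (hx : x ∈ I.S) : I.bd I.S = I.bd {x} + I.bd (I.S.erase x) := by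
  rw [← bd_insert (Finset.Subset.refl _), Finset.insert_erase hx]

/-- A set `A` retains its cut condition when `k` pairs of edges from `A` to the lifted vertex `x`
are split off. -/
lemma lift_check (hI : I.Valid) (hs : I.Strict) (h3 : 3 ≤ I.S.card) (hx : x ∈ I.S)
    (hxc : I.cut {x} = 4) (hxb : I.bd {x} = 0) (hA : A ⊆ I.S.erase x) (hAn : A.Nonempty)
    (hne : A ≠ I.S.erase x) {k : ℕ} (hk : k ≤ 2) (hkA : 2 * k ≤ ∑ u ∈ A, I.m x u) :
    4 + I.t A + 2 * k ≤ I.cut A := by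
  have hAS : A ⊆ I.S := hA.trans (Finset.erase_subset _ _)
  have hAne : A ≠ I.S := by rintro rfl; simpa using hA hx
  have hxA : x ∉ A := fun h => by simpa using hA h
  have hsub : insert x A ⊆ I.S := Finset.insert_subset hx hAS
  have hci := cut_insert hI.toWF hx hA
  have hti : I.t (insert x A) = I.t A := by
    unfold t
    rw [bd_insert hA, hxb, zero_add]
    exact excess_parity (by omega) _
  have hcard : (insert x A).card = A.card + 1 := Finset.card_insert_of_notMem hxA
  have hpos := hAn.card_pos
  rcases Nat.lt_or_ge A.card 2 with h | h
  · -- a singleton `{y}` with two edges to `x`: use the slack of `{x, y}`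
    have h1 := hs _ hsub (by intro h; rw [h] at hcard; omega) (by omega)
    have h0 := hI.cuts _ hAS hAn hAne
    omega
  · have h1 := hs _ hAS hAne h
    have h2 := hI.cuts _ hsub (Finset.insert_nonempty _ _) (insert_ne hA hne)
    have h4 : k = 0 ∨ k = 1 ∨ k = 2 := by omega
    omega

lemma lift_valid (hI : I.Valid) (hs : I.Strict) (h3 : 3 ≤ I.S.card) (hx : x ∈ I.S)
    (hxc : I.cut {x} = 4) (hxb : I.bd {x} = 0) (hJ : J.WF) (hJS : J.S = I.S.erase x)
    (hroot : J.cut J.S = I.cut I.S)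
    (hc : ∀ A ⊆ I.S.erase x, ∃ k ≤ 2, 2 * k ≤ ∑ u ∈ A, I.m x u ∧ J.cut A + 2 * k = I.cut A)
    (hb : ∀ A ⊆ I.S.erase x, J.bd A = I.bd A) : J.Valid := by
  refine ⟨hJ, ?_, ?_, fun A hA hAn hAne => ?_⟩
  · rw [hJS, Finset.card_erase_of_mem hx]; omega
  · rw [hroot]
    refine hI.root.trans ?_
    unfold t
    rw [hroot, hJS, hb _ (Finset.Subset.refl _), bd_eq hx, hxb, zero_add]
  · rw [hJS] at hA hAne
    obtain ⟨k, hk, hkA, hcA⟩ := hc A hA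
    have := lift_check hI hs h3 hx hxc hxb hA hAn hAne hk hkA
    have ht : J.t A = I.t A := by
      unfold t
      rw [hb A hA]
      exact excess_parity (by omega) _
    omega

lemma eq_hub (hI : I.WF) {l : V → ℕ} (hl : ∀ u ∈ I.S.erase x, I.m x u = l u) {b : V → ZMod 3}
    (hf : HasFlow I.S (hub I.m x l) b) : HasFlow I.S I.m b := by
  refine hf.congr (fun u hu v hv huv => ?_) fun _ _ => rfl
  unfold hub
  by_cases hux : u = x
  · subst hux
    rw [if_pos rfl, hl v (Finset.mem_erase.mpr ⟨huv.symm, hv⟩)]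
  · by_cases hvx : v = x
    · subst hvx
      rw [if_neg hux, if_pos rfl, hI.symm, hl u (Finset.mem_erase.mpr ⟨hux, hu⟩)]
    · rw [if_neg hux, if_neg hvx]

lemma sum_ind (p : V) (A : Finset V) :
    ∑ u ∈ A, (if u = p then 1 else 0 : ℕ) = if p ∈ A then 1 else 0 := by
  simp

/-- A vertex of degree four with zero boundary can be removed by splitting off its edges in
pairs. -/
lemma solve_lift (hI : I.Valid) (hs : I.Strict) (h3 : 3 ≤ I.S.card)
    (hout : ∀ J : Rooted V, J.S.card < I.S.card → J.Valid → HasFlow J.S J.m J.b)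
    (hx : x ∈ I.S) (hxc : I.cut {x} = 4) (hxb : I.bd {x} = 0) : HasFlow I.S I.m I.b := by
  have hW := hI.toWF
  have hcard : (I.S.erase x).card = I.S.card - 1 := Finset.card_erase_of_mem hx
  have hne : I.S.erase x ≠ I.S := by intro h; rw [h] at hcard; omega
  have hcc := cut_compl hW hx
  have hst := hs _ (Finset.erase_subset x I.S) hne (by omega)
  have hbS := bd_eq hx
  rw [hxb, zero_add] at hbS
  have htS : I.t (I.S.erase x) = I.t I.S := by
    unfold t; rw [hbS]; exact excess_parity (by omega) _
  have hroot := hI.root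
  have hdeg := I.cut_singleton (x := x)
  have hsr : ∑ v ∈ I.S, I.r v = I.r x + ∑ v ∈ I.S.erase x, I.r v := (Finset.add_sum_erase _ _ hx).symm
  have hsb : I.b x + ∑ v ∈ I.S.erase x, I.b v = 0 := by rw [Finset.add_sum_erase _ _ hx, hW.sum]
  have hmem : ∀ {p}, p ∈ I.S.erase x → p ≠ x ∧ p ∈ I.S := Finset.mem_erase.mp
  have hbx : I.b x = I.h x := by rw [bd_singleton] at hxb; exact sub_eq_zero.mp hxb
  have hmx : ∀ A : Finset V, ∑ u ∈ A, I.m u x = ∑ u ∈ A, I.m x u := fun A =>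
    Finset.sum_congr rfl fun u _ => hW.symm _ _
  rcases Nat.eq_zero_or_pos (I.r x) with hr | hr
  · obtain ⟨p₁, hp₁, l₁, hl₁, hs₁⟩ := exists_peel (S := I.S.erase x) (l := I.m x) (by omega)
    obtain ⟨p₂, hp₂, l₂, hl₂, hs₂⟩ := exists_peel (S := I.S.erase x) (l := l₁) (by omega)
    obtain ⟨p₃, hp₃, l₃, hl₃, hs₃⟩ := exists_peel (S := I.S.erase x) (l := l₂) (by omega)
    obtain ⟨p₄, hp₄, l₄, hl₄, hs₄⟩ := exists_peel (S := I.S.erase x) (l := l₃) (by omega)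
    have hl₅ : ∀ u ∈ I.S.erase x, l₄ u = 0 := Finset.sum_eq_zero_iff.mp (by omega)
    have hb0 : I.b x = 0 := by rw [hbx]; exact (hW.adm x hx).1 hr
    let J : Rooted V := { I with
      S := I.S.erase x
      m := fun u w => I.m u w + edge p₁ p₂ u w + edge p₃ p₄ u w }
    have hJ : J.Valid := by
      refine lift_valid hI hs h3 hx hxc hxb ⟨fun u w => ?_, fun u hu => hW.adm u (hmem hu).2, ?_⟩
        rfl ?_ (fun A hA => ?_) fun A _ => rfl
      · simp only [J]
        rw [hW.symm, edge_symm p₁, edge_symm p₃]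
      · simpa [hb0] using hsb
      · rw [cut_S, cut_S, hsr, hr, zero_add]
      · have hm : ∑ u ∈ A, I.m x u = (if p₁ ∈ A then 1 else 0) + (if p₂ ∈ A then 1 else 0) +
            (if p₃ ∈ A then 1 else 0) + (if p₄ ∈ A then 1 else 0) := by
          rw [Finset.sum_congr rfl fun u _ => hl₁ u]
          rw [Finset.sum_add_distrib, Finset.sum_congr rfl fun u _ => hl₂ u]
          rw [Finset.sum_add_distrib, Finset.sum_congr rfl fun u _ => hl₃ u]
          rw [Finset.sum_add_distrib, Finset.sum_congr rfl fun u _ => hl₄ u]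
          rw [Finset.sum_add_distrib, Finset.sum_eq_zero fun u hu => hl₅ u (hA hu)]
          simp only [sum_ind]
          ring
        have hcJ : J.cut A = ∑ u ∈ A, ∑ w ∈ I.S.erase x \ A,
            (I.m u w + edge p₁ p₂ u w + edge p₃ p₄ u w) + ∑ u ∈ A, I.r u := rfl
        have hcI := cut_erase hx hA
        simp only [Finset.sum_add_distrib] at hcJ
        rw [sum_edge hp₁ hp₂, sum_edge hp₃ hp₄] at hcJ
        rw [hmx] at hcI
        refine ⟨(if p₁ ∈ A ∧ p₂ ∈ A then 1 else 0) + (if p₃ ∈ A ∧ p₄ ∈ A then 1 else 0), ?_, ?_, ?_⟩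
        · split_ifs <;> omega
        · rw [hm]
          by_cases h1 : p₁ ∈ A <;> by_cases h2 : p₂ ∈ A <;> by_cases h3 : p₃ ∈ A <;>
            by_cases h4 : p₄ ∈ A <;> simp [h1, h2, h3, h4]
        · rw [hcJ, hcI, hm]
          by_cases h1 : p₁ ∈ A <;> by_cases h2 : p₂ ∈ A <;> by_cases h3 : p₃ ∈ A <;>
            by_cases h4 : p₄ ∈ A <;> simp [h1, h2, h3, h4] <;> omega
    have hf := hout J (by change (I.S.erase x).card < _; omega) hJ
    have hf1 : HasFlow I.S (hub J.m x fun _ => 0) I.b := by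
      refine HasFlow.merge (g := fun _ => 0) hx (fun _ _ => adm_zero) (by simp [hb0]) ?_
      exact hf.congr (fun _ _ _ _ _ => rfl) fun u _ => (add_zero _).symm
    have hf2 := HasFlow.lift (m := fun u w => I.m u w + edge p₁ p₂ u w)
      (fun u w => by rw [hW.symm, edge_symm p₁]) hx (hmem hp₃).2 (hmem hp₄).2
      (hmem hp₃).1 (hmem hp₄).1 hf1
    have hf3 := HasFlow.lift hW.symm hx (hmem hp₁).2 (hmem hp₂).2 (hmem hp₁).1 (hmem hp₂).1 hf2
    refine eq_hub hW (fun u hu => ?_) hf3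
    rw [hl₁, hl₂, hl₃, hl₄, hl₅ u hu]
    ring
  · have hr1 : I.r x = 1 := by omega
    obtain ⟨p₁, hp₁, l₁, hl₁, hs₁⟩ := exists_peel (S := I.S.erase x) (l := I.m x) (by omega)
    obtain ⟨p₂, hp₂, l₂, hl₂, hs₂⟩ := exists_peel (S := I.S.erase x) (l := l₁) (by omega)
    obtain ⟨p₃, hp₃, l₃, hl₃, hs₃⟩ := exists_peel (S := I.S.erase x) (l := l₂) (by omega)
    have hl₄ : ∀ u ∈ I.S.erase x, l₃ u = 0 := Finset.sum_eq_zero_iff.mp (by omega)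
    have hη : I.h x ≠ 0 := (hW.adm x hx).2 hr1
    -- the root edge at `x` is paired with the edge from `x` to `p₁`
    let J : Rooted V :=
      { S := I.S.erase x
        m := fun u w => I.m u w + edge p₂ p₃ u w
        r := fun u => I.r u + if u = p₁ then 1 else 0
        h := fun u => I.h u + if u = p₁ then I.h x else 0
        b := fun u => I.b u + if u = p₁ then I.h x else 0 }
    have hadm : ∀ u, Adm (if u = p₁ then 1 else 0) (if u = p₁ then I.h x else 0) := by
      intro u
      split_ifs
      · exact adm_one hη
      · exact adm_zero
    have hJ : J.Valid := by
      refine lift_valid hI hs h3 hx hxc hxb ⟨fun u w => ?_,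
        fun u hu => (hW.adm u (hmem hu).2).add (hadm u), ?_⟩
        rfl ?_ (fun A hA => ?_) fun A _ => ?_
      · simp only [J]
        rw [hW.symm, edge_symm p₂]
      · simp only [J, Finset.sum_add_distrib, Finset.sum_ite_eq', hp₁, if_true]
        rw [← hbx, add_comm]
        exact hsb
      · rw [cut_S, cut_S, hsr, hr1]
        simp only [J, Finset.sum_add_distrib, Finset.sum_ite_eq', hp₁, if_true]
        omega
      · have hm : ∑ u ∈ A, I.m x u = (if p₁ ∈ A then 1 else 0) + (if p₂ ∈ A then 1 else 0) +
            (if p₃ ∈ A then 1 else 0) := by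
          rw [Finset.sum_congr rfl fun u _ => hl₁ u]
          rw [Finset.sum_add_distrib, Finset.sum_congr rfl fun u _ => hl₂ u]
          rw [Finset.sum_add_distrib, Finset.sum_congr rfl fun u _ => hl₃ u]
          rw [Finset.sum_add_distrib, Finset.sum_eq_zero fun u hu => hl₄ u (hA hu)]
          simp only [sum_ind]
          ring
        have hcJ : J.cut A = ∑ u ∈ A, ∑ w ∈ I.S.erase x \ A,
            (I.m u w + edge p₂ p₃ u w) + ∑ u ∈ A, (I.r u + if u = p₁ then 1 else 0) := rfl
        have hcI := cut_erase hx hA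
        simp only [Finset.sum_add_distrib, sum_ind] at hcJ
        rw [sum_edge hp₂ hp₃] at hcJ
        rw [hmx] at hcI
        refine ⟨if p₂ ∈ A ∧ p₃ ∈ A then 1 else 0, ?_, ?_, ?_⟩
        · split_ifs <;> omega
        · rw [hm]
          by_cases h2 : p₂ ∈ A <;> by_cases h3 : p₃ ∈ A <;> simp [h2, h3]
        · rw [hcJ, hcI, hm]
          by_cases h1 : p₁ ∈ A <;> by_cases h2 : p₂ ∈ A <;> by_cases h3 : p₃ ∈ A <;>
            simp [h1, h2, h3] <;> omega
      · unfold bd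
        exact Finset.sum_congr rfl fun u _ => by simp only [J]; ring
    have hf := hout J (by change (I.S.erase x).card < _; omega) hJ
    have hf1 : HasFlow I.S (hub J.m x fun u => if u = p₁ then 1 else 0) I.b := by
      refine HasFlow.merge (g := fun u => if u = p₁ then I.h x else 0) hx (fun u _ => hadm u) ?_ hf
      rw [hbx]
      simp only [Finset.sum_ite_eq', hp₁, if_true]
    have hf2 := HasFlow.lift hW.symm hx (hmem hp₂).2 (hmem hp₃).2 (hmem hp₂).1 (hmem hp₃).1 hf1
    refine eq_hub hW (fun u hu => ?_) hf2
    rw [hl₁, hl₂, hl₃, hl₄ u hu]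
    ring

end Rooted

namespace Rooted

/-! ### Deleting a single edge -/

variable {I J : Rooted V} {A B : Finset V} {u v x y : V} {δ : ZMod 3}

/-- The vertex `v` keeps its cut condition after an edge at `v` is deleted to which the value `δ`,
directed out of `v`, is assigned. -/
def Acc (I : Rooted V) (v : V) (δ : ZMod 3) : Prop :=
  4 + excess (I.cut {v} - 1) (I.bd {v} - δ) ≤ I.cut {v} - 1

/-- The number of edges, those inside `S` counted twice (a nonzero diagonal of `m` also contributes,
but no reduction changes it). -/
def size (I : Rooted V) : ℕ := ∑ u ∈ I.S, ∑ v ∈ I.S, I.m u v + ∑ v ∈ I.S, I.r v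

/-- Deleting an edge, with an assigned value, changes the cut of each set by at most one. Sets with
at least two elements can afford this by strictness, single vertices by acceptance. -/
lemma delete_valid (hI : I.Valid) (hs : I.Strict) (hJ : J.WF) (hS : J.S = I.S)
    (hc : ∀ A ⊆ I.S, (J.cut A = I.cut A ∧ J.bd A = I.bd A) ∨
      (J.cut A + 1 = I.cut A ∧ ∃ e, e ≠ 0 ∧ J.bd A = I.bd A - e ∧ ∀ w, A = {w} → I.Acc w e)) :
    J.Valid := by
  refine ⟨hJ, hS ▸ hI.two, ?_, fun A hA hAn hAne => ?_⟩
  · have h0 := hI.root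
    rw [hS]
    unfold t at h0 ⊢
    rcases hc I.S (Finset.Subset.refl _) with ⟨h1, h2⟩ | ⟨h1, e, he, h2, -⟩
    · rwa [h1, h2]
    · rw [h2]
      have := (excess_step h1 (I.bd I.S) he).2
      omega
  · rw [hS] at hA hAne
    unfold t
    rcases hc A hA with ⟨h1, h2⟩ | ⟨h1, e, he, h2, h3⟩
    · rw [h1, h2]
      exact hI.cuts A hA hAn hAne
    · rw [h2]
      rcases Nat.lt_or_ge A.card 2 with h | h
      · obtain ⟨w, rfl⟩ := Finset.card_eq_one.mp (le_antisymm (by omega) hAn.card_pos)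
        have := h3 w rfl
        unfold Acc at this
        rwa [show I.cut {w} - 1 = J.cut {w} by omega] at this
      · have h4 := hs A hA hAne h
        unfold t at h4
        have := (excess_step h1 (I.bd A) he).1
        omega

/-- An edge `uv` can be deleted, with a value `δ` assigned to it, if both ends accept this. -/
lemma solve_delete (hI : I.Valid) (hs : I.Strict)
    (hin : ∀ J : Rooted V, J.S = I.S → J.size < I.size → J.Valid → HasFlow J.S J.m J.b)
    (hu : u ∈ I.S) (hv : v ∈ I.S) (huv : u ≠ v) (hm : I.m u v ≠ 0) (hδ : δ ≠ 0)
    (hau : I.Acc u δ) (hav : I.Acc v (-δ)) : HasFlow I.S I.m I.b := by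
  let J : Rooted V := { I with
    m := fun x y => I.m x y - edge u v x y
    b := fun x => I.b x - (if x = u then δ else 0) + (if x = v then δ else 0) }
  have hmJ : ∀ x y, I.m x y = J.m x y + edge u v x y := by
    intro x y
    have : edge u v x y ≤ I.m x y := by
      unfold edge
      by_cases h1 : x = u ∧ y = v
      · rw [if_pos h1, if_neg (by rintro ⟨h, -⟩; exact huv (h1.1.symm.trans h)), h1.1, h1.2]
        omega
      · by_cases h2 : x = v ∧ y = u
        · rw [if_neg h1, if_pos h2, h2.1, h2.2, hI.symm]
          omega
        · rw [if_neg h1, if_neg h2]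
          omega
    simp only [J]
    omega
  have hJ : J.Valid := by
    refine delete_valid hI hs ⟨fun x y => ?_, hI.adm, ?_⟩ rfl fun A hA => ?_
    · simp only [J]
      rw [hI.symm, edge_symm]
    · simp only [J, Finset.sum_add_distrib, Finset.sum_sub_distrib, Finset.sum_ite_eq', hu, hv,
        if_true, hI.sum]
      ring
    · have hcI : I.cut A = ∑ x ∈ A, ∑ y ∈ I.S \ A, I.m x y + ∑ x ∈ A, I.r x := rfl
      have hcJ : J.cut A = ∑ x ∈ A, ∑ y ∈ I.S \ A, J.m x y + ∑ x ∈ A, I.r x := rfl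
      simp only [hmJ, Finset.sum_add_distrib] at hcI
      rw [sum_edge hu hv] at hcI
      have hb : J.bd A = I.bd A - (if u ∈ A then δ else 0) + (if v ∈ A then δ else 0) := by
        simp only [bd, J, Finset.sum_add_distrib, Finset.sum_sub_distrib, Finset.sum_ite_eq']
        ring
      by_cases h1 : u ∈ A <;> by_cases h2 : v ∈ A <;>
        simp only [h1, h2, if_true, if_false, not_true, not_false_iff, and_true, and_false] at hcI hb
      · refine Or.inl ⟨by omega, by rw [hb]; ring⟩
      · refine Or.inr ⟨by omega, δ, hδ, by rw [hb]; ring, ?_⟩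
        rintro w rfl
        rwa [← Finset.mem_singleton.mp h1]
      · refine Or.inr ⟨by omega, -δ, neg_ne_zero.mpr hδ, by rw [hb]; ring, ?_⟩
        rintro w rfl
        rwa [← Finset.mem_singleton.mp h2]
      · refine Or.inl ⟨by omega, by rw [hb]; ring⟩
  have hsz : J.size < I.size := by
    have h1 : I.size = ∑ x ∈ I.S, ∑ y ∈ I.S, I.m x y + ∑ x ∈ I.S, I.r x := rfl
    have h2 : J.size = ∑ x ∈ I.S, ∑ y ∈ I.S, J.m x y + ∑ x ∈ I.S, I.r x := rfl
    simp only [hmJ, Finset.sum_add_distrib] at h1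
    have h3 : edge u v u v ≤ ∑ x ∈ I.S, ∑ y ∈ I.S, edge u v x y :=
      (Finset.single_le_sum (f := fun y => edge u v u y) (fun _ _ => Nat.zero_le _) hv).trans
        (Finset.single_le_sum (f := fun x => ∑ y ∈ I.S, edge u v x y)
          (fun _ _ => Nat.zero_le _) hu)
    have h4 : 1 ≤ edge u v u v := by simp [edge]
    omega
  obtain ⟨f, h1, h2, h3⟩ := hin J rfl hsz hJ
  refine ⟨fun x y => f x y + unitFlow u v δ x y, fun x y => ?_, fun x hx y hy hxy => ?_,
    fun x hx => ?_⟩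
  · simp only
    rw [h1 x y, unitFlow_neg u v δ x y]
    ring
  · rw [hmJ]
    refine (h2 x hx y hy hxy).add ?_
    unfold edge unitFlow
    by_cases e1 : x = u
    · by_cases e2 : y = v
      · simpa [e1, e2, huv] using adm_one hδ
      · simpa [e1, e2, huv] using adm_zero
    · by_cases e2 : x = v
      · by_cases e3 : y = u
        · simpa [e2, e3, huv, huv.symm] using (adm_one hδ).neg
        · simpa [e2, e3, huv, huv.symm] using adm_zero
      · simpa [e1, e2] using adm_zero
  · rw [Finset.sum_add_distrib, unitFlow_sum hu hv, h3 x hx]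
    simp only [J]
    ring

/-- A root edge at `v` can be deleted, with a value `δ` out of `v` assigned to it, if `v` accepts
this and the remaining root edges at `v` can carry the remaining value. -/
lemma solve_delete_root (hI : I.Valid) (hs : I.Strict)
    (hin : ∀ J : Rooted V, J.S = I.S → J.size < I.size → J.Valid → HasFlow J.S J.m J.b)
    (hv : v ∈ I.S) (hr : I.r v ≠ 0) (hδ : δ ≠ 0) (hav : I.Acc v δ)
    (hadm : Adm (I.r v - 1) (I.h v + δ)) : HasFlow I.S I.m I.b := by
  let J : Rooted V := { I with
    r := fun x => I.r x - (if x = v then 1 else 0)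
    h := fun x => I.h x + (if x = v then δ else 0) }
  have hrJ : ∀ x, I.r x = J.r x + if x = v then 1 else 0 := by
    intro x
    simp only [J]
    split_ifs with h
    · rw [h]; omega
    · rfl
  have hJ : J.Valid := by
    refine delete_valid hI hs ⟨hI.symm, fun x hx => ?_, hI.sum⟩ rfl fun A hA => ?_
    · simp only [J]
      split_ifs with h
      · rw [h]; exact hadm
      · simpa using hI.adm x hx
    · have hcI : I.cut A = ∑ x ∈ A, ∑ y ∈ I.S \ A, I.m x y + ∑ x ∈ A, I.r x := rfl
      have hcJ : J.cut A = ∑ x ∈ A, ∑ y ∈ I.S \ A, I.m x y + ∑ x ∈ A, J.r x := rfl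
      simp only [hrJ, Finset.sum_add_distrib, sum_ind] at hcI
      have hb : J.bd A = I.bd A - (if v ∈ A then δ else 0) := by
        simp only [bd, J, Finset.sum_add_distrib, Finset.sum_sub_distrib, Finset.sum_ite_eq']
        ring
      by_cases h1 : v ∈ A <;> simp only [h1, if_true, if_false] at hcI hb
      · refine Or.inr ⟨by omega, δ, hδ, hb, ?_⟩
        rintro w rfl
        rwa [← Finset.mem_singleton.mp h1]
      · exact Or.inl ⟨by omega, by rw [hb, sub_zero]⟩
  have hsz : J.size < I.size := by
    have h1 : I.size = ∑ x ∈ I.S, ∑ y ∈ I.S, I.m x y + ∑ x ∈ I.S, I.r x := rfl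
    have h2 : J.size = ∑ x ∈ I.S, ∑ y ∈ I.S, I.m x y + ∑ x ∈ I.S, J.r x := rfl
    simp only [hrJ, Finset.sum_add_distrib, sum_ind, hv, if_true] at h1
    omega
  exact hin J rfl hsz hJ

end Rooted

/-! ### Merging a vertex into the root -/

lemma adm_cast (n : ℕ) : Adm n (-(n : ZMod 3)) :=
  ⟨fun h => by simp [h], fun h => by rw [h]; decide⟩

/-- A vertex of degree `c` with net outflow `z` satisfying its cut condition, and not removable by
lifting, accepts the deletion of an edge with value `1` or `-1`; it accepts only one of the two
in four exceptional cases. -/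
lemma acc_cases {c : ℕ} {z : ZMod 3} (h : 4 + excess c z ≤ c) (hz : ¬ (c = 4 ∧ z = 0)) :
    (4 + excess (c - 1) (z - 1) ≤ c - 1 ∧ 4 + excess (c - 1) (z - -1) ≤ c - 1) ∨
    (4 + excess (c - 1) (z - 1) ≤ c - 1 ∧ (c = 5 ∧ z = 1 ∨ c = 6 ∧ z = 2)) ∨
    (4 + excess (c - 1) (z - -1) ≤ c - 1 ∧ (c = 5 ∧ z = 2 ∨ c = 6 ∧ z = 1)) := by
  rcases zmod3_cases z with rfl | rfl | rfl
  · rw [show (0 : ZMod 3) - 1 = 2 by decide, show (0 : ZMod 3) - -1 = 1 by decide]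
    simp only [excess_zero, excess_one, excess_two, and_true] at *
    omega
  · rw [show (1 : ZMod 3) - 1 = 0 by decide, show (1 : ZMod 3) - -1 = 2 by decide]
    simp only [excess_zero, excess_one, excess_two, and_true,
      show ((1 : ZMod 3) = 2) ↔ False by decide] at *
    omega
  · rw [show (2 : ZMod 3) - 1 = 1 by decide, show (2 : ZMod 3) - -1 = 0 by decide]
    simp only [excess_zero, excess_one, excess_two, and_true,
      show ((2 : ZMod 3) = 1) ↔ False by decide] at *
    omega

/-- The strict cut condition leaves room for the ordinary one after the deletion of two
edges of value 1, with two exceptions. -/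
lemma drop_two {c : ℕ} {z : ZMod 3} (h : 6 + excess c z ≤ c) (h6 : ¬ (c = 6 ∧ z = 0))
    (h7 : ¬ (c = 7 ∧ z = 2)) : 4 + excess (c - 2) (z - 2) ≤ c - 2 := by
  rcases zmod3_cases z with rfl | rfl | rfl
  · rw [show (0 : ZMod 3) - 2 = 1 by decide]
    simp only [excess_zero, excess_one, and_true] at *
    omega
  · rw [show (1 : ZMod 3) - 2 = 2 by decide]
    simp only [excess_one, excess_two] at *
    omega
  · rw [show (2 : ZMod 3) - 2 = 0 by decide]
    simp only [excess_zero, excess_two, and_true] at *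
    omega

namespace Rooted

variable {I J : Rooted V} {A B : Finset V} {u v x y : V} {δ : ZMod 3}

/-- The edges at `x` inside `S` can be assigned values solving the equation at `x`, where the edges
`del` receive the value 1 directed into `x` and at least two edges remain free. The equations at
the other vertices then form an instance in which the free edges at `x` have become root edges,
and the edges `del` are deleted. -/
lemma merge_delete (hI : I.WF) (hx : x ∈ I.S) (del : V → ℕ)
    (hdel : ∀ v ∈ I.S.erase x, del v ≤ I.m x v)
    (hK : ∑ v ∈ I.S.erase x, del v + 2 ≤ ∑ v ∈ I.S.erase x, I.m x v) :
    ∃ J : Rooted V, J.S = I.S.erase x ∧ J.WF ∧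
      (∀ A ⊆ I.S.erase x, J.cut A + ∑ v ∈ A, del v = I.cut A ∧
        J.bd A = I.bd A - ((∑ v ∈ A, del v : ℕ) : ZMod 3)) ∧
      (HasFlow J.S J.m J.b → HasFlow I.S I.m I.b) := by
  have hsub : ∀ A ⊆ I.S.erase x,
      ∑ v ∈ A, I.m x v = ∑ v ∈ A, (I.m x v - del v) + ∑ v ∈ A, del v := fun A hA => by
    rw [← Finset.sum_add_distrib]
    exact Finset.sum_congr rfl fun v hv => (Nat.sub_add_cancel (hdel v (hA hv))).symm
  have htot := hsub _ (Finset.Subset.refl _)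
  obtain ⟨g, hg, hgs⟩ := adm_distrib (I.S.erase x) (fun v => I.m x v - del v)
    (I.b x + ((∑ v ∈ I.S.erase x, del v : ℕ) : ZMod 3)) (adm_of_two_le (by omega) _)
  have hsb : I.b x + ∑ v ∈ I.S.erase x, I.b v = 0 := by rw [Finset.add_sum_erase _ _ hx, hI.sum]
  let J : Rooted V :=
    { S := I.S.erase x
      m := I.m
      r := fun v => I.r v + (I.m x v - del v)
      h := fun v => I.h v + g v
      b := fun v => I.b v + (g v + -(del v : ZMod 3)) }
  have hgd : ∑ v ∈ I.S.erase x, (g v + -(del v : ZMod 3)) = I.b x := by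
    rw [Finset.sum_add_distrib, Finset.sum_neg_distrib, hgs]
    push_cast
    ring
  refine ⟨J, rfl, ⟨hI.symm, fun v hv => (hI.adm v (Finset.mem_of_mem_erase hv)).add (hg v hv), ?_⟩,
    fun A hA => ⟨?_, ?_⟩, fun hf => ?_⟩
  · simp only [J]
    rw [Finset.sum_add_distrib, hgd, add_comm]
    exact hsb
  · have hcJ : J.cut A = ∑ u ∈ A, ∑ v ∈ I.S.erase x \ A, I.m u v +
        ∑ u ∈ A, (I.r u + (I.m x u - del u)) := rfl
    rw [Finset.sum_add_distrib] at hcJ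
    have hcI := cut_erase hx hA
    have hmx : ∑ u ∈ A, I.m u x = ∑ u ∈ A, I.m x u :=
      Finset.sum_congr rfl fun u _ => hI.symm _ _
    have := hsub A hA
    omega
  · simp only [bd, J]
    push_cast
    rw [← Finset.sum_sub_distrib]
    exact Finset.sum_congr rfl fun v _ => by ring
  · refine eq_hub hI (fun _ _ => rfl) (HasFlow.merge hx (fun v hv => ?_) hgd hf)
    have := (hg v hv).add (adm_cast (del v))
    rwa [Nat.sub_add_cancel (hdel v hv)] at this

/-- The cut condition of every proper set survives the deletion of one edge of value 1. -/
lemma drop_one (hs : I.Strict) (hacc : ∀ y ∈ I.S, I.Acc y 1) (hB : B ⊆ I.S)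
    (hBn : B.Nonempty) (hBne : B ≠ I.S) :
    4 + excess (I.cut B - 1) (I.bd B - 1) ≤ I.cut B - 1 := by
  rcases Nat.lt_or_ge B.card 2 with h | h
  · obtain ⟨w, rfl⟩ := Finset.card_eq_one.mp (le_antisymm (by omega) hBn.card_pos)
    exact hacc w (by simpa using hB)
  · have h1 := hs B hB hBne h
    unfold t at h1
    have := (excess_step (show I.cut B - 1 + 1 = I.cut B by omega) (I.bd B)
      (show (1 : ZMod 3) ≠ 0 by decide)).1
    omega

/-- The case in which every vertex `v` has `cut {v} = 4 + τ` and `bd {v} = τ` with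
`τ = 1` or `τ = 2`. -/
lemma solve_positive (hI : I.Valid) (hs : I.Strict) (h3 : 3 ≤ I.S.card)
    (hout : ∀ J : Rooted V, J.S.card < I.S.card → J.Valid → HasFlow J.S J.m J.b)
    (hin : ∀ J : Rooted V, J.S = I.S → J.size < I.size → J.Valid → HasFlow J.S J.m J.b)
    (hcls : ∀ v ∈ I.S, I.cut {v} = 5 ∧ I.bd {v} = 1 ∨ I.cut {v} = 6 ∧ I.bd {v} = 2) :
    HasFlow I.S I.m I.b := by
  by_contra hno
  have hW := hI.toWF
  have hacc : ∀ y ∈ I.S, I.Acc y 1 := by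
    intro y hy
    unfold Acc
    rcases hcls y hy with ⟨h1, h2⟩ | ⟨h1, h2⟩ <;> rw [h1, h2] <;> decide
  -- no root edge can be deleted with value 1 directed out of its end
  have hrh : ∀ v ∈ I.S, I.r v ≤ 2 ∧ I.h v = (I.r v : ZMod 3) := by
    intro v hv
    have h0 := hW.adm v hv
    by_cases hr0 : I.r v = 0
    · rw [hr0, h0.1 hr0]; simp
    have h1 : ¬ Adm (I.r v - 1) (I.h v + 1) := fun h =>
      hno (solve_delete_root hI hs hin hv hr0 (by decide) (hacc v hv) h)
    have hr3 : I.r v < 3 := by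
      by_contra hr3
      exact h1 (adm_of_two_le (by omega) _)
    have hr12 : I.r v = 1 ∨ I.r v = 2 := by omega
    rcases hr12 with hr | hr <;> rw [hr] at h1 ⊢ <;> refine ⟨by norm_num, ?_⟩ <;>
      rcases zmod3_cases (I.h v) with hh | hh | hh <;> rw [hh] at h1 ⊢
    · exact absurd hh (h0.2 hr)
    · rfl
    · exact absurd adm_zero h1
    · exact absurd (adm_one (by decide)) h1
    · exact absurd (adm_one (by decide)) h1
    · rfl
  obtain ⟨o, ho⟩ : ∃ o, o = I.cut I.S := ⟨_, rfl⟩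
  have hbS : I.bd I.S = -(o : ZMod 3) := by
    rw [ho, cut_S]
    unfold bd
    rw [Finset.sum_sub_distrib, hW.sum, Finset.sum_congr rfl fun v hv => (hrh v hv).2]
    push_cast
    ring
  -- the root has degree `o` and net value `-o`, which excludes `o = 6` and `o = 7`
  have ho5 : o ≤ 5 := by
    have h1 := hI.root
    have h2 := I.t_le (A := I.S)
    rw [← ho] at h1
    have h7 : o ≤ 7 := by omega
    unfold t at h1
    rw [hbS, ← ho] at h1
    by_contra h5
    have h67 : o = 6 ∨ o = 7 := by omega
    rcases h67 with rfl | rfl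
    · exact absurd h1 (by decide)
    · exact absurd h1 (by decide)
  have hτ : ∀ x ∈ I.S, ∃ τ : ℕ, (τ = 1 ∨ τ = 2) ∧ I.cut {x} = 4 + τ ∧ I.bd {x} = (τ : ZMod 3) := by
    intro x hx
    rcases hcls x hx with ⟨h1, h2⟩ | ⟨h1, h2⟩
    · exact ⟨1, Or.inl rfl, h1, by rw [h2]; rfl⟩
    · exact ⟨2, Or.inr rfl, h1, by rw [h2]; rfl⟩
  have herase : ∀ x ∈ I.S, (I.S.erase x).card = I.S.card - 1 := fun x hx =>
    Finset.card_erase_of_mem hx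
  have hproper : ∀ x ∈ I.S, ∀ A ⊆ I.S.erase x, A ⊆ I.S ∧ A ≠ I.S := fun x hx A hA =>
    ⟨hA.trans (Finset.erase_subset _ _), by rintro rfl; simpa using hA hx⟩
  have hbe : ∀ x ∈ I.S, I.bd (I.S.erase x) = -(o : ZMod 3) - I.bd {x} := fun x hx => by
    rw [← hbS, bd_eq hx]; ring
  have hcases : (∀ x ∈ I.S, I.r x = 0) ∨ (∃ x ∈ I.S, I.r x = 2) ∨ ∃ x ∈ I.S, I.r x = 1 := by
    by_contra! h
    obtain ⟨⟨x, hx, h0⟩, h2, h1⟩ := h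
    have := (hrh x hx).1
    have := h1 x hx
    have := h2 x hx
    omega
  -- merging `x` into the root gives root degree `o + 4 + τ - 2 * r x`, and `o = 0` when there is no
  -- root edge; this is brought down to an allowed degree by deleting no, one or two further edges
  -- at `x`, according as `r x` is `0`, `2` or `1`
  rcases hcases with hr | ⟨x, hx, hr⟩ | ⟨x, hx, hr⟩
  · obtain ⟨x, hx⟩ : I.S.Nonempty := Finset.card_pos.mp (by omega)
    obtain ⟨τ, hτ12, hτc, hτb⟩ := hτ x hx
    have ho0 : o = 0 := by rw [ho, cut_S, Finset.sum_eq_zero hr]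
    have hcs := I.cut_singleton (x := x)
    have hcc := cut_compl hW hx
    have hrx := hr x hx
    obtain ⟨J, hJS, hJW, hJ, hJf⟩ := merge_delete hW hx (fun _ => 0) (fun _ _ => Nat.zero_le _)
      (by rw [Finset.sum_const_zero]; omega)
    simp only [Finset.sum_const_zero, add_zero, Nat.cast_zero, sub_zero] at hJ
    refine hno (hJf (hout J (by rw [hJS, herase x hx]; omega)
      ⟨hJW, by rw [hJS, herase x hx]; omega, ?_, fun A hA hAn hAne => ?_⟩))
    · unfold t
      rw [hJS, (hJ _ (Finset.Subset.refl _)).1, (hJ _ (Finset.Subset.refl _)).2, hbe x hx, hτb, ho0,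
        show I.cut (I.S.erase x) = 4 + τ by omega]
      rcases hτ12 with rfl | rfl <;> decide
    · rw [hJS] at hA
      unfold t
      rw [(hJ A hA).1, (hJ A hA).2]
      exact hI.cuts A (hproper x hx A hA).1 hAn (hproper x hx A hA).2
  · obtain ⟨τ, hτ12, hτc, hτb⟩ := hτ x hx
    have hcs := I.cut_singleton (x := x)
    have hcc := cut_compl hW hx
    obtain ⟨y, hy, hmy⟩ := Finset.exists_ne_zero_of_sum_ne_zero
      (show ∑ v ∈ I.S.erase x, I.m x v ≠ 0 by omega)
    obtain ⟨J, hJS, hJW, hJ, hJf⟩ := merge_delete hW hx (fun v => if v = y then 1 else 0)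
      (fun v _ => by
        split_ifs with h
        · rw [h]; omega
        · omega)
      (by rw [sum_ind, if_pos hy]; omega)
    simp only [sum_ind] at hJ
    refine hno (hJf (hout J (by rw [hJS, herase x hx]; omega)
      ⟨hJW, by rw [hJS, herase x hx]; omega, ?_, fun A hA hAn hAne => ?_⟩))
    · have h1 := hJ _ (Finset.Subset.refl _)
      rw [if_pos hy] at h1
      unfold t
      rw [hJS, h1.2, hbe x hx, hτb, show J.cut (I.S.erase x) = o + τ - 1 by omega]
      rcases hτ12 with rfl | rfl <;> interval_cases o <;> decide
    · rw [hJS] at hA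
      obtain ⟨hAS, hAneS⟩ := hproper x hx A hA
      obtain ⟨h1, h2⟩ := hJ A hA
      unfold t
      rw [h2]
      by_cases hyA : y ∈ A
      · rw [if_pos hyA] at h1 ⊢
        rw [Nat.cast_one, show J.cut A = I.cut A - 1 by omega]
        exact drop_one hs hacc hAS hAn hAneS
      · rw [if_neg hyA] at h1 ⊢
        rw [Nat.cast_zero, sub_zero, show J.cut A = I.cut A by omega]
        exact hI.cuts A hAS hAn hAneS
  · obtain ⟨τ, hτ12, hτc, hτb⟩ := hτ x hx
    have hcs := I.cut_singleton (x := x)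
    have hcc := cut_compl hW hx
    obtain ⟨y, hy, hmy⟩ := Finset.exists_ne_zero_of_sum_ne_zero
      (show ∑ v ∈ I.S.erase x, I.m x v ≠ 0 by omega)
    -- a largest set which would be destroyed by the loss of two edges
    let P : Finset V → Prop := fun X => X ≠ I.S.erase x ∧ y ∈ X ∧
      (X = {y} ∨ (I.cut X = 6 ∧ I.bd X = 0) ∨ (I.cut X = 7 ∧ I.bd X = 2))
    have hPy : P {y} := by
      refine ⟨fun h => ?_, Finset.mem_singleton_self y, Or.inl rfl⟩
      have := herase x hx
      rw [← h, Finset.card_singleton] at this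
      omega
    obtain ⟨A, hAmem, hmax⟩ := Finset.exists_max_image ((I.S.erase x).powerset.filter P) Finset.card
      ⟨{y}, Finset.mem_filter.mpr ⟨by simpa using hy, hPy⟩⟩
    obtain ⟨hApow, hAne, hyA, hAcase⟩ := Finset.mem_filter.mp hAmem
    have hA : A ⊆ I.S.erase x := Finset.mem_powerset.mp hApow
    have hAn : A.Nonempty := ⟨y, hyA⟩
    have hxA : x ∉ A := fun h => by simpa using hA h
    have hcutA : I.cut A ≤ 7 := by
      rcases hAcase with rfl | ⟨h, -⟩ | ⟨h, -⟩
      · rcases hcls y (Finset.mem_of_mem_erase hy) with ⟨h, -⟩ | ⟨h, -⟩ <;> omega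
      · omega
      · omega
    -- otherwise all edges at `x` inside `S` go to `A`, and `A ∪ {x}` has too small a cut
    obtain ⟨z, hz, hzA, hmz⟩ : ∃ z ∈ I.S.erase x, z ∉ A ∧ I.m x z ≠ 0 := by
      by_contra! hall
      have h1 : ∑ v ∈ A, I.m x v = ∑ v ∈ I.S.erase x, I.m x v :=
        Finset.sum_subset hA fun v hv hvA => hall v hv hvA
      have h2 := cut_insert hW hx hA
      have h4 := hs _ (Finset.insert_subset hx (hproper x hx A hA).1) (insert_ne hA hAne)
        (by rw [Finset.card_insert_of_notMem hxA]; have := hAn.card_pos; omega)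
      omega
    have hyz : y ≠ z := by rintro rfl; exact hzA hyA
    obtain ⟨J, hJS, hJW, hJ, hJf⟩ := merge_delete hW hx
      (fun v => (if v = y then 1 else 0) + if v = z then 1 else 0)
      (fun v _ => by
        by_cases h : v = y
        · rw [if_pos h, if_neg (h ▸ hyz), h]; omega
        · by_cases h' : v = z
          · rw [if_neg h, if_pos h', h']; omega
          · rw [if_neg h, if_neg h']; omega)
      (by rw [Finset.sum_add_distrib, sum_ind, sum_ind, if_pos hy, if_pos hz]; omega)
    simp only [Finset.sum_add_distrib, sum_ind] at hJ
    have hroot : J.cut J.S ≤ 4 + J.t J.S := by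
      have h1 := hJ _ (Finset.Subset.refl _)
      rw [if_pos hy, if_pos hz] at h1
      unfold t
      rw [hJS, h1.2, hbe x hx, hτb, show J.cut (I.S.erase x) = o + τ by omega]
      rcases hτ12 with rfl | rfl <;> interval_cases o <;> decide
    have hsmall : ∀ B ⊆ I.S.erase x, B.Nonempty → ¬ (y ∈ B ∧ z ∈ B) → 4 + J.t B ≤ J.cut B := by
      intro B hB hBn hyzB
      obtain ⟨hBS, hBneS⟩ := hproper x hx B hB
      obtain ⟨h1, h2⟩ := hJ B hB
      unfold t
      rw [h2]
      by_cases hyB : y ∈ B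
      · have hzB : z ∉ B := fun h => hyzB ⟨hyB, h⟩
        rw [if_pos hyB, if_neg hzB] at h1 ⊢
        rw [show ((1 + 0 : ℕ) : ZMod 3) = 1 by decide, show J.cut B = I.cut B - 1 by omega]
        exact drop_one hs hacc hBS hBn hBneS
      · by_cases hzB : z ∈ B
        · rw [if_neg hyB, if_pos hzB] at h1 ⊢
          rw [show ((0 + 1 : ℕ) : ZMod 3) = 1 by decide, show J.cut B = I.cut B - 1 by omega]
          exact drop_one hs hacc hBS hBn hBneS
        · rw [if_neg hyB, if_neg hzB] at h1 ⊢
          rw [show ((0 + 0 : ℕ) : ZMod 3) = 0 by decide, sub_zero, show J.cut B = I.cut B by omega]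
          exact hI.cuts B hBS hBn hBneS
    have hJ1 : ∀ B ⊆ J.S, B.Nonempty → B ≠ J.S → (A ⊆ B ∨ Disjoint A B) →
        4 + J.t B ≤ J.cut B := by
      intro B hB hBn hBne hAB
      rw [hJS] at hB hBne
      by_cases hyzB : y ∈ B ∧ z ∈ B
      · obtain ⟨hyB, hzB⟩ := hyzB
        have hsub : A ⊆ B := hAB.resolve_right fun h => Finset.disjoint_left.mp h hyA hyB
        have hlt : A.card < B.card := Finset.card_lt_card
          (hsub.ssubset_of_ne (by rintro rfl; exact hzA hzB))
        have hnP : ¬ P B := fun h => absurd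
          (hmax B (Finset.mem_filter.mpr ⟨Finset.mem_powerset.mpr hB, h⟩)) (by omega)
        have hpos := hAn.card_pos
        obtain ⟨hBS, hBneS⟩ := hproper x hx B hB
        have h6 := hs B hBS hBneS (by omega)
        obtain ⟨h1, h2⟩ := hJ B hB
        rw [if_pos hyB, if_pos hzB] at h1 h2
        unfold t
        rw [h2, show ((1 + 1 : ℕ) : ZMod 3) = 2 by decide, show J.cut B = I.cut B - 2 by omega]
        exact drop_two h6 (fun h => hnP ⟨hBne, hyB, Or.inr (Or.inl h)⟩)
          (fun h => hnP ⟨hBne, hyB, Or.inr (Or.inr h)⟩)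
      · exact hsmall B hB hBn hyzB
    rcases Nat.lt_or_ge A.card 2 with hA2 | hA2
    · obtain ⟨w, rfl⟩ := Finset.card_eq_one.mp (le_antisymm (by omega) hAn.card_pos)
      refine hno (hJf (hout J (by rw [hJS, herase x hx]; omega)
        ⟨hJW, by rw [hJS, herase x hx]; omega, hroot, fun B hB hBn hBne => hJ1 B hB hBn hBne ?_⟩))
      simp only [Finset.singleton_subset_iff, Finset.disjoint_singleton_left]
      exact em _
    · refine hno (hJf (contract_solve hJW (fun K hK => hout K ?_) (hJS ▸ hA) (hJS ▸ hAne) hA2 hroot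
        ?_ hJ1 fun B hB hBn hBne => hsmall B (hB.trans hA) hBn fun h => hzA (hB h.2)))
      · rw [hJS, herase x hx] at hK
        omega
      · obtain ⟨h1, h2⟩ := hJ A hA
        rw [if_pos hyA, if_neg hzA] at h1 h2
        unfold t
        rw [h2]
        rcases hAcase with rfl | ⟨h4, h5⟩ | ⟨h4, h5⟩
        · simp at hA2
        · rw [show J.cut A = 5 by omega, h5]
          decide
        · rw [show J.cut A = 6 by omega, h5]
          decide

end Rooted

namespace Rooted

/-! ### The induction -/

variable {I J : Rooted V} {A B : Finset V} {u v x y : V} {δ : ZMod 3}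

lemma solve_two (hI : I.Valid) (h2 : I.S.card = 2) : HasFlow I.S I.m I.b := by
  obtain ⟨x, y, hxy, hS⟩ := Finset.card_eq_two.mp h2
  have hx : x ∈ I.S := by simp [hS]
  have hy : y ∈ I.S := by simp [hS]
  have hne : ∀ z : V, ({z} : Finset V) ≠ I.S := by
    intro z h
    rw [← h, Finset.card_singleton] at h2
    omega
  have hU : ({x} : Finset V) ∪ {y} = I.S := by rw [hS]; rfl
  have hd : Disjoint ({x} : Finset V) {y} := by simpa using hxy
  have h3 := cut_union hI.toWF (A := {x}) (B := {y}) (by simpa using hx) (by simpa using hy) hd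
  have h4 := t_union hI.toWF (A := {x}) (B := {y}) (by simpa using hx) (by simpa using hy) hd
  have h5 := hI.cuts {x} (by simpa using hx) (Finset.singleton_nonempty x) (hne x)
  have h6 := hI.cuts {y} (by simpa using hy) (Finset.singleton_nonempty y) (hne y)
  have h7 := hI.root
  rw [hU, Finset.sum_singleton, Finset.sum_singleton] at h3
  rw [hU] at h4
  have hsum := hI.sum
  rw [hS, Finset.sum_pair hxy] at hsum
  refine ⟨unitFlow x y (I.b x), unitFlow_neg _ _ _, fun u hu v hv huv => ?_, fun u hu => ?_⟩
  · rw [hS, Finset.mem_insert, Finset.mem_singleton] at hu hv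
    rcases hu with rfl | rfl <;> rcases hv with rfl | rfl
    · exact absurd rfl huv
    · exact adm_of_two_le (by omega) _
    · rw [hI.symm]
      exact adm_of_two_le (by omega) _
    · exact absurd rfl huv
  · rw [unitFlow_sum hx hy]
    rw [hS, Finset.mem_insert, Finset.mem_singleton] at hu
    rcases hu with rfl | rfl
    · simp [hxy]
    · simp only [hxy.symm, if_true, if_false, zero_sub]
      exact neg_eq_of_add_eq_zero_right hsum

/-- The instance with all values negated. -/
def opp (I : Rooted V) : Rooted V := { I with h := fun v => - I.h v, b := fun v => - I.b v }

lemma opp_bd : I.opp.bd A = - I.bd A := by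
  unfold bd opp
  rw [← Finset.sum_neg_distrib]
  exact Finset.sum_congr rfl fun v _ => by ring

lemma opp_t : I.opp.t A = I.t A := by
  unfold t
  rw [opp_bd, excess_neg]
  rfl

lemma opp_valid (hI : I.Valid) : I.opp.Valid := by
  refine ⟨⟨hI.symm, fun v hv => (hI.adm v hv).neg, ?_⟩, hI.two, ?_, fun A hA hAn hAne => ?_⟩
  · simp only [opp, Finset.sum_neg_distrib, hI.sum, neg_zero]
  · rw [opp_t]
    exact hI.root
  · rw [opp_t]
    exact hI.cuts A hA hAn hAne

/-- The induction step: a valid instance is solved by one of the reductions to instances with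
fewer vertices, or with the same vertices and fewer edges. -/
lemma solve_step (hI : I.Valid)
    (hout : ∀ J : Rooted V, J.S.card < I.S.card → J.Valid → HasFlow J.S J.m J.b)
    (hin : ∀ J : Rooted V, J.S = I.S → J.size < I.size → J.Valid → HasFlow J.S J.m J.b) :
    HasFlow I.S I.m I.b := by
  by_contra hno
  have hW := hI.toWF
  have h3 : 3 ≤ I.S.card := by
    have := hI.two
    by_contra h
    exact hno (solve_two hI (by omega))
  have hs : I.Strict := by
    intro A hA hAne hA2
    by_contra h
    have h1 := I.t_mod (A := A)
    have hAn : A.Nonempty := Finset.card_pos.mp (by omega)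
    have h2 := hI.cuts A hA hAn hAne
    exact hno (contract_solve hW hout hA hAne hA2 hI.root (by omega)
      (fun B hB hBn hBne _ => hI.cuts B hB hBn hBne)
      fun B hB hBn hBne => hI.cuts B (hB.trans hA) hBn
        fun h => hBne (Finset.Subset.antisymm hB (h ▸ hA)))
  have hcase : ∀ v ∈ I.S, (I.Acc v 1 ∧ I.Acc v (-1)) ∨
      (I.Acc v 1 ∧ (I.cut {v} = 5 ∧ I.bd {v} = 1 ∨ I.cut {v} = 6 ∧ I.bd {v} = 2)) ∨
      (I.Acc v (-1) ∧ (I.cut {v} = 5 ∧ I.bd {v} = 2 ∨ I.cut {v} = 6 ∧ I.bd {v} = 1)) := by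
    intro v hv
    refine acc_cases (hI.cuts {v} (by simpa using hv) (Finset.singleton_nonempty v) fun h => ?_)
      fun h => hno (solve_lift hI hs h3 hout hv h.1 h.2)
    rw [← h, Finset.card_singleton] at h3
    omega
  have hdel : ∀ u ∈ I.S, ∀ v ∈ I.S, u ≠ v → I.Acc u 1 → I.Acc v (-1) → I.m u v = 0 := by
    intro u hu v hv huv h1 h2
    by_contra hm
    exact hno (solve_delete hI hs hin hu hv huv hm (by decide) h1 h2)
  have hone : ∀ v ∈ I.S, I.Acc v 1 → I.Acc v (-1) → False := by
    -- such a vertex has no neighbour in `S`, so it has many root edges, one of which can go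
    intro v hv h1 h2
    have hz : ∑ u ∈ I.S.erase v, I.m v u = 0 := Finset.sum_eq_zero fun u hu => by
      have hu' := Finset.mem_erase.mp hu
      rcases hcase u hu'.2 with h | h | h
      · exact hdel v hv u hu'.2 hu'.1.symm h1 h.2
      · rw [hI.symm]
        exact hdel u hu'.2 v hv hu'.1 h.1 h2
      · exact hdel v hv u hu'.2 hu'.1.symm h1 h.1
    have hc := I.cut_singleton (x := v)
    have h4 : 5 ≤ I.cut {v} := by unfold Acc at h1; omega
    exact hno (solve_delete_root hI hs hin hv (by omega) (by decide) h1
      (adm_of_two_le (by omega) _))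
  let P := I.S.filter fun v => I.Acc v 1
  have hPS : P ⊆ I.S := Finset.filter_subset _ _
  have hNacc : ∀ v ∈ I.S \ P, I.Acc v (-1) := by
    intro v hv
    obtain ⟨hvS, hvP⟩ := Finset.mem_sdiff.mp hv
    have hv1 : ¬ I.Acc v 1 := fun h => hvP (Finset.mem_filter.mpr ⟨hvS, h⟩)
    rcases hcase v hvS with h | h | h
    · exact h.2
    · exact absurd h.1 hv1
    · exact h.1
  rcases Finset.eq_empty_or_nonempty P with hP | hP
  · have hn1 : ∀ v ∈ I.S, ¬ I.Acc v 1 := fun v hv h =>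
      Finset.notMem_empty v (hP ▸ Finset.mem_filter.mpr ⟨hv, h⟩)
    have hf : HasFlow I.opp.S I.opp.m I.opp.b := by
      refine solve_positive (opp_valid hI) (fun A hA hAne hA2 => ?_) h3 hout hin fun v hv => ?_
      · rw [opp_t]
        exact hs A hA hAne hA2
      · rw [opp_bd]
        change I.cut {v} = 5 ∧ _ ∨ I.cut {v} = 6 ∧ _
        rcases hcase v hv with h | h | ⟨-, h | h⟩
        · exact absurd h.1 (hn1 v hv)
        · exact absurd h.1 (hn1 v hv)
        · exact Or.inl ⟨h.1, by rw [h.2]; decide⟩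
        · exact Or.inr ⟨h.1, by rw [h.2]; decide⟩
    exact hno (hf.neg.congr (fun _ _ _ _ _ => rfl) fun v _ => neg_neg (I.b v))
  · rcases Finset.eq_empty_or_nonempty (I.S \ P) with hN | hN
    · have hall : ∀ v ∈ I.S, I.Acc v 1 := fun v hv =>
        (Finset.mem_filter.mp (Finset.sdiff_eq_empty_iff_subset.mp hN hv)).2
      refine hno (solve_positive hI hs h3 hout hin fun v hv => ?_)
      rcases hcase v hv with h | h | h
      · exact (hone v hv h.1 h.2).elim
      · exact h.2
      · exact (hone v hv (hall v hv) h.1).elim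
    · -- no edge joins the two classes, so the root has degree at least eight
      have h1 := cut_union hW hPS Finset.sdiff_subset Finset.disjoint_sdiff
      rw [Finset.union_sdiff_of_subset hPS] at h1
      have h2 : ∑ u ∈ P, ∑ v ∈ I.S \ P, I.m u v = 0 :=
        Finset.sum_eq_zero fun u hu => Finset.sum_eq_zero fun v hv => by
          refine hdel u (hPS hu) v (Finset.sdiff_subset hv) ?_ (Finset.mem_filter.mp hu).2
            (hNacc v hv)
          rintro rfl
          exact (Finset.mem_sdiff.mp hv).2 hu
      obtain ⟨p, hp⟩ := hP
      obtain ⟨n, hn⟩ := hN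
      have h4 := hI.cuts P hPS ⟨p, hp⟩ fun h =>
        (Finset.mem_sdiff.mp hn).2 (h ▸ (Finset.mem_sdiff.mp hn).1)
      have hpN : p ∉ I.S \ P := fun h => (Finset.mem_sdiff.mp h).2 hp
      have h5 := hI.cuts (I.S \ P) Finset.sdiff_subset ⟨n, hn⟩ fun h =>
        hpN (by rw [h]; exact hPS hp)
      have h6 := hI.root
      have h7 := I.t_le (A := I.S)
      omega

/-- Every valid instance has a flow, by induction on the number of vertices and then on the number
of edges. -/
theorem Valid.hasFlow (hI : I.Valid) : HasFlow I.S I.m I.b := by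
  obtain ⟨n, hn⟩ : ∃ n, I.S.card = n := ⟨_, rfl⟩
  induction n using Nat.strong_induction_on generalizing I with
  | _ n ihn =>
    obtain ⟨k, hk⟩ : ∃ k, I.size = k := ⟨_, rfl⟩
    induction k using Nat.strong_induction_on generalizing I with
    | _ k ihk =>
      exact solve_step hI (fun J hJ hJv => ihn _ (hn ▸ hJ) hJv rfl)
        fun J hJS hJ hJv => ihk _ (hk ▸ hJ) hJv (hJS ▸ hn) rfl

end Rooted

/-! ### Graphs as instances without root edges -/

/-- A graph with boundary `β`, as an instance whose root is isolated. -/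
noncomputable def ofGraph [Fintype V] (G : SimpleGraph V) (β : V → ZMod 3) : Rooted V where
  S := Finset.univ
  m u v := if G.Adj u v then 1 else 0
  r _ := 0
  h _ := 0
  b := β

lemma ofGraph_cut [Fintype V] (G : SimpleGraph V) (β : V → ZMod 3) (A : Finset V) :
    (ofGraph G β).cut A = cutSize G A := by
  have h : cutSize G A = ((A ×ˢ (Finset.univ \ A)).filter fun p => G.Adj p.1 p.2).card := by
    unfold cutSize
    congr 1
    ext p
    simp only [Finset.mem_filter, Finset.mem_univ, Finset.mem_product, Finset.mem_sdiff, true_and]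
    tauto
  rw [h, Finset.card_filter, Finset.sum_product]
  simp [Rooted.cut, ofGraph]

/-- A graph in which every cut is nonempty is connected, so a boundary has total zero. -/
lemma boundary_sum [Fintype V] {G : SimpleGraph V} (hG : EdgeConnected G 6) {β : V → ZMod 3}
    (hβ : IsBoundary G β) : ∑ v, β v = 0 := by
  obtain ⟨x⟩ : Nonempty V := Fintype.card_pos_iff.mp (by have := hG.1; omega)
  by_cases h : Finset.univ.filter (fun v => G.Reachable v x) = Finset.univ
  · rw [← hβ x, h]
  · have h6 := hG.2 (Finset.univ.filter fun v => G.Reachable v x) ⟨x, Finset.mem_filter.mpr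
      ⟨Finset.mem_univ x, SimpleGraph.Reachable.refl x⟩⟩ h
    have h0 : cutSize G (Finset.univ.filter fun v => G.Reachable v x) = 0 := by
      refine Finset.card_eq_zero.mpr (Finset.eq_empty_of_forall_notMem fun p hp => ?_)
      simp only [Finset.mem_filter, Finset.mem_univ, true_and] at hp
      exact hp.2.2 (hp.1.symm.reachable.trans hp.2.1)
    omega

lemma ofGraph_valid [Fintype V] {G : SimpleGraph V} (hG : EdgeConnected G 6) {β : V → ZMod 3}
    (hβ : IsBoundary G β) : (ofGraph G β).Valid := by
  refine ⟨⟨fun u v => ?_, fun _ _ => adm_zero, boundary_sum hG hβ⟩, hG.1, ?_,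
    fun A _ hAn hAne => ?_⟩
  · simp only [ofGraph, G.adj_comm]
  · rw [Rooted.cut_S]
    simp [ofGraph]
  · have h6 := hG.2 A hAn hAne
    have h1 := (ofGraph G β).t_mod (A := A)
    have h2 := (ofGraph G β).t_le (A := A)
    rw [ofGraph_cut] at h1 ⊢
    -- a cut of size six has even excess, hence excess at most two
    omega

end Instances

/-- Every 6-edge-connected graph is `ℤ₃`-connected: `(G, β)` has a nowhere-zero flow for
every `ℤ₃`-boundary `β`. -/
theorem six_edge_connected_z3_connected (V : Type) [Fintype V] [DecidableEq V]
    (G : SimpleGraph V) (hG : EdgeConnected G 6)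
    (β : V → ZMod 3) (hβ : IsBoundary G β) :
    HasNZFlow G β := by
  obtain ⟨f, h1, h2, h3⟩ := (ofGraph_valid hG hβ).hasFlow
  have hadm : ∀ u v, u ≠ v → Adm (if G.Adj u v then 1 else 0) (f u v) := fun u v huv =>
    h2 u (Finset.mem_univ u) v (Finset.mem_univ v) huv
  refine ⟨f, fun u v _ => h1 u v, fun u v huv => ?_, fun u => ?_⟩
  · have := hadm u v huv.ne
    rw [if_pos huv] at this
    exact this.2 rfl
  · refine Eq.trans ?_ (h3 u (Finset.mem_univ u))
    refine Finset.sum_subset (Finset.filter_subset _ _) fun v _ hv => ?_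
    have huv : ¬ G.Adj u v := fun h => hv (Finset.mem_filter.mpr ⟨Finset.mem_univ v, h⟩)
    rcases eq_or_ne u v with rfl | hne
    · have key : ∀ z : ZMod 3, z = -z → z = 0 := by decide
      exact key _ (h1 u u)
    · have := hadm u v hne
      rw [if_neg huv] at this
      exact this.1 rfl
end

section
/- For every integer k ≥ 6, every 2-edge-connected graph G has a nowhere-zero ℤ_k-flow; that is, (G, 0) has a nowhere-zero flow, where 0 is the zero ℤ_k-boundary. -/
/-!
Seymour's 6-flow theorem, with `ℤ_k` for all `k ≥ 6`.

The argument takes place in finite oriented multigraphs `s t : E → V` (loops and parallel edges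
allowed), since it contracts edges. A nowhere-zero flow over `ℤ₂ × ℤ₃` is found first.

*Three-edge-connected graphs* (`flow_of_three`). Call `U ⊆ V` good (`GoodSet`) if some `ℤ₂`-flow `c`
inside `U` is such that every zero-sum `ℤ₃`-boundary on `U` is realised inside `U` by a function
avoiding one prescribed value on each edge inside `U` where `c` vanishes. A singleton is good. If
`U ≠ V` is good, take a minimal nonempty `B` disjoint from `U` such that at most one edge leaves
`B` in `G - U`. Then `B` induces a 2-edge-connected graph (or a point), and 3-edge-connectivity
gives two edges from `B` to `U`, with ends `x, y ∈ B`. An integral flow of value 2 from `x` to `y`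
inside `B`, with values in `{-1, 0, 1}`, is even at every vertex, and the component `W` of its
support containing `x` also contains `y` (`even_conn`). Then `U ∪ W` is good (`step`): two choices
on each of two edges between `U` and `W` give all three possible totals over `W`, the connected
support of the new even part realises any zero-sum boundary on `W`, and the rest is absorbed by
`U`. So `V` is good, and prescribing the value `0` gives the flow.

*Two-edge-connected graphs* (`flow_of_two`). If `{e, f}` is a 2-edge cut, contract `e`, take a flow
of the smaller graph and extend it to `e`; its value there is plus or minus the value at `f`.

*From `ℤ₂ × ℤ₃` to `ℤ_k`*. The flow lifts to nonzero integers of absolute value less than `6` whose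
boundary is divisible by `6`. Following Tutte (`int_flow`), as long as the boundary is nonzero,
adding `±6` along a directed path from an excess to a deficit makes it smaller. The resulting
integer flow reduces modulo every `k ≥ 6` to a nowhere-zero flow.

The flow of value 2, the components of a support and Tutte's lemma all rest on one augmentation
lemma, `grow`.
-/

open scoped Classical

namespace SixFlow

/-! ### Boundaries and augmentation in oriented multigraphs -/

variable {V E A : Type} [Fintype E] [AddCommGroup A]

/-- The boundary (net outflow) at `v` of `g`, in the oriented multigraph with edge set `E` where
`e : E` goes from `s e` to `t e`. Loops contribute zero. -/
noncomputable def bd (s t : E → V) (g : E → A) (v : V) : A :=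
  ∑ e, ((if s e = v then g e else 0) - (if t e = v then g e else 0))

/-- The edges with exactly one end in `X`. -/
noncomputable def cut (s t : E → V) (X : Finset V) : Finset E :=
  Finset.univ.filter fun e => ¬ (s e ∈ X ↔ t e ∈ X)

lemma bd_add (s t : E → V) (g h : E → A) : bd s t (g + h) = bd s t g + bd s t h := by
  funext v
  simp only [bd, Pi.add_apply, ← Finset.sum_add_distrib]
  refine Finset.sum_congr rfl fun e _ => ?_
  split_ifs <;> abel

lemma bd_zero (s t : E → V) : bd s t (0 : E → A) = 0 := by
  funext v; simp [bd]

lemma bd_sum {ι : Type} (s t : E → V) (I : Finset ι) (g : ι → E → A) :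
    bd s t (∑ i ∈ I, g i) = ∑ i ∈ I, bd s t (g i) := by
  induction I using Finset.induction_on with
  | empty => simp [bd_zero]
  | insert i I hi ih => rw [Finset.sum_insert hi, Finset.sum_insert hi, bd_add, ih]

lemma bd_map {B : Type} [AddCommGroup B] (F : A →+ B) (s t : E → V) (g : E → A) (v : V) :
    bd s t (fun e => F (g e)) v = F (bd s t g v) := by
  simp only [bd, map_sum, map_sub, apply_ite F, map_zero]

lemma bd_single (s t : E → V) (e : E) (q : A) :
    bd s t (Pi.single e q) = Pi.single (s e) q - Pi.single (t e) q := by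
  funext v
  rw [bd, Finset.sum_eq_single e]
  · simp [Pi.single_apply, eq_comm]
  · intro b _ hb; simp [hb]
  · simp

/-- Edges inside `X` contribute zero, so the sum is the net value leaving `X`. -/
lemma sum_bd (s t : E → V) (g : E → A) (X : Finset V) :
    ∑ v ∈ X, bd s t g v =
      ∑ e, ((if s e ∈ X then g e else 0) - (if t e ∈ X then g e else 0)) := by
  simp only [bd]
  rw [Finset.sum_comm]
  refine Finset.sum_congr rfl fun e _ => ?_
  rw [Finset.sum_sub_distrib, Finset.sum_ite_eq, Finset.sum_ite_eq]

lemma sum_bd_univ [Fintype V] (s t : E → V) (g : E → A) : ∑ v, bd s t g v = 0 := by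
  rw [sum_bd]; simp

/-- Augmentation. From `x`, push an amount `q` along edges where this keeps all values admissible
(`Val`). The vertices reached form a set `S`; every admissible push out of `S` is blocked.
No augmenting paths are needed: `S` is a maximal set all of whose vertices can be reached by a
modification of `g` on edges inside the set. -/
lemma grow [Fintype V] (s t : E → V) (Val : E → A → Prop) (q : A) (g : E → A)
    (hg : ∀ e, Val e (g e)) (x : V) :
    ∃ S : Finset V, x ∈ S ∧
      (∀ z ∈ S, ∃ g' : E → A, (∀ e, Val e (g' e)) ∧
        (∀ e, (s e ∉ S ∨ t e ∉ S) → g' e = g e) ∧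
        bd s t g' = bd s t g + Pi.single x q - Pi.single z q) ∧
      (∀ e, s e ∈ S → t e ∉ S → ¬ Val e (g e + q)) ∧
      (∀ e, t e ∈ S → s e ∉ S → ¬ Val e (g e - q)) := by
  let P : Finset V → Prop := fun S => x ∈ S ∧
      (∀ z ∈ S, ∃ g' : E → A, (∀ e, Val e (g' e)) ∧
        (∀ e, (s e ∉ S ∨ t e ∉ S) → g' e = g e) ∧
        bd s t g' = bd s t g + Pi.single x q - Pi.single z q)
  have h0 : P {x} := by
    refine ⟨by simp, fun z hz => ⟨g, hg, fun _ _ => rfl, ?_⟩⟩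
    rw [Finset.mem_singleton] at hz
    subst hz; abel
  obtain ⟨S, hS, hmax⟩ := (Set.toFinite {S | P S}).exists_maximal ⟨_, h0⟩
  -- An unsaturated edge leaving `S` would allow its far end to be added to `S`.
  have key : ∀ (e : E) (w z : V) (r : A), w ∈ S → z ∉ S →
      (s e = w ∧ t e = z ∨ s e = z ∧ t e = w) →
      bd s t (Pi.single e r) = Pi.single w q - Pi.single z q → ¬ Val e (g e + r) := by
    intro e w z r hw hz hinc hb hv
    have hout : s e ∉ S ∨ t e ∉ S := by rcases hinc with ⟨-, h⟩ | ⟨h, -⟩ <;> simp [h, hz]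
    obtain ⟨gw, hgw, hgw', hbw⟩ := hS.2 w hw
    have : P (insert z S) := by
      refine ⟨Finset.mem_insert_of_mem hS.1, fun y hy => ?_⟩
      rcases Finset.mem_insert.1 hy with rfl | hy
      · refine ⟨gw + Pi.single e r, fun e' => ?_, fun e' he' => ?_, ?_⟩
        · by_cases h : e' = e
          · subst h; simpa [hgw' _ hout] using hv
          · simpa [h] using hgw e'
        · have h1 : e' ≠ e := by
            rintro rfl
            simp only [Finset.mem_insert, not_or] at he'
            rcases hinc with ⟨rfl, rfl⟩ | ⟨rfl, rfl⟩ <;> simp_all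
          simp only [Pi.add_apply, Pi.single_eq_of_ne h1, add_zero]
          refine hgw' e' ?_
          simp only [Finset.mem_insert, not_or] at he'
          tauto
        · rw [bd_add, hb, hbw]; abel
      · obtain ⟨gy, h1, h2, h3⟩ := hS.2 y hy
        refine ⟨gy, h1, fun e' he' => h2 e' ?_, h3⟩
        simp only [Finset.mem_insert, not_or] at he'
        tauto
    exact hz (hmax this (Finset.subset_insert z S) (Finset.mem_insert_self z S))
  refine ⟨S, hS.1, hS.2, fun e h1 h2 => ?_, fun e h1 h2 => ?_⟩
  · exact key e _ _ q h1 h2 (Or.inl ⟨rfl, rfl⟩) (bd_single ..)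
  · rw [sub_eq_add_neg]
    refine key e _ _ (-q) h1 h2 (Or.inr ⟨rfl, rfl⟩) ?_
    rw [bd_single, Pi.single_neg, Pi.single_neg]; abel

/-! ### From flows modulo six to integer flows -/

/-- Tutte's lemma for modulus `6`, by induction on the total absolute boundary `N`: pushing `-6` from
a vertex `x` of positive boundary replaces `g e` by `g e - 6` on edges that carry positive flow
away from `x`. If no vertex of negative boundary is reached, no positive flow leaves the reached
set, although its total boundary is positive. -/
lemma int_flow [Fintype V] (s t : E → V) (N : ℕ) : ∀ g : E → ℤ, (∀ e, g e ≠ 0 ∧ |g e| < 6) →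
    (∀ v, 6 ∣ bd s t g v) → ∑ v, (bd s t g v).natAbs = N →
    ∃ g : E → ℤ, (∀ e, g e ≠ 0 ∧ |g e| < 6) ∧ bd s t g = 0 := by
  induction N using Nat.strong_induction_on with
  | _ N ih =>
  intro g hg hdvd hN
  by_cases h0 : bd s t g = 0
  · exact ⟨g, hg, h0⟩
  obtain ⟨x, hx⟩ : ∃ x, 0 < bd s t g x := by
    by_contra! hle
    refine h0 (funext fun v => ?_)
    exact (Finset.sum_eq_zero_iff_of_nonpos (fun i _ => hle i)).1 (sum_bd_univ s t g) v
      (Finset.mem_univ v)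
  obtain ⟨S, hxS, hS, hout, hin⟩ := grow s t (fun _ v => v ≠ 0 ∧ |v| < 6) (-6) g hg x
  by_cases hneg : ∃ z ∈ S, bd s t g z < 0
  · obtain ⟨z, hz, hzneg⟩ := hneg
    obtain ⟨g', hg', -, hb⟩ := hS z hz
    have hxz : x ≠ z := by rintro rfl; omega
    have hb' : ∀ v, bd s t g' v =
        bd s t g v + (if v = x then -6 else 0) - (if v = z then -6 else 0) := by
      intro v; rw [hb]; simp [Pi.single_apply]
    refine ih _ ?_ g' hg' ?_ rfl
    · rw [← hN]
      refine Finset.sum_lt_sum (fun v _ => ?_) ⟨x, Finset.mem_univ x, ?_⟩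
      · have h1 := hdvd v
        rw [hb']
        split_ifs with h2 h3 h3
        · omega
        · subst h2; omega
        · subst h3; omega
        · omega
      · have h1 := hdvd x
        rw [hb', if_pos rfl, if_neg hxz]; omega
    · intro v
      have h1 := hdvd v
      rw [hb']
      split_ifs <;> omega
  · exfalso
    push Not at hneg
    have h1 : 0 < ∑ v ∈ S, bd s t g v := Finset.sum_pos' hneg ⟨x, hxS, hx⟩
    rw [sum_bd] at h1
    refine absurd h1 (not_lt.2 (Finset.sum_nonpos fun e _ => ?_))
    have h2 := hg e
    have h3 := hout e
    have h4 := hin e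
    simp only [abs_lt] at h2 h3 h4
    by_cases hs : s e ∈ S <;> by_cases ht : t e ∈ S <;> simp only [hs, ht, if_true, if_false]
    · omega
    · have := h3 hs ht; omega
    · have := h4 ht hs; omega
    · omega

/-! ### Good sets of vertices -/

/-- `U` is good if some `ℤ₂`-flow `c` supported inside `U` has the following property: every
zero-sum `ℤ₃`-boundary `β` on `U` is the boundary of a function `φ` supported inside `U` which avoids
the prescribed value `h e` on each edge `e` inside `U` with `c e = 0`. Taking `h` arbitrary is what
allows good sets to be enlarged; it also forces the graph inside `U` to be connected. -/
def GoodSet [Fintype V] (s t : E → V) (U : Finset V) : Prop :=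
  ∃ c : E → ZMod 2, (∀ e, c e ≠ 0 → s e ∈ U ∧ t e ∈ U) ∧ bd s t c = 0 ∧
    ∀ (h : E → ZMod 3) (β : V → ZMod 3), (∀ v, v ∉ U → β v = 0) → ∑ v, β v = 0 →
      ∃ φ : E → ZMod 3, (∀ e, φ e ≠ 0 → s e ∈ U ∧ t e ∈ U) ∧ bd s t φ = β ∧
        ∀ e, s e ∈ U → t e ∈ U → c e = 0 → φ e ≠ h e

lemma goodSet_singleton [Fintype V] (s t : E → V) (r : V) : GoodSet s t {r} := by
  refine ⟨0, by simp, bd_zero s t, fun h β hβ hsum => ?_⟩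
  have hβ0 : β = 0 := by
    funext v
    by_cases hv : v = r
    · subst hv
      rw [Pi.zero_apply, ← hsum,
        Finset.sum_eq_single v (fun b _ hb => hβ b (by simpa using hb)) (by simp)]
    · exact hβ v (by simpa using hv)
  refine ⟨fun e => if s e = r ∧ t e = r then h e + 1 else 0, fun e he => ?_, ?_, ?_⟩
  · by_contra hc
    simp only [Finset.mem_singleton] at hc
    simp [hc] at he
  · rw [hβ0]
    funext v
    refine Finset.sum_eq_zero fun e _ => ?_
    by_cases h1 : s e = r <;> by_cases h2 : t e = r <;> simp [h1, h2]
  · intro e h1 h2 _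
    rw [Finset.mem_singleton] at h1 h2
    simp [h1, h2]

/-- The coefficient of `e` in the net outflow of `W`: `1` if `e` leaves `W`, `-1` if it enters `W`,
and `0` otherwise. -/
noncomputable def sgn (s t : E → V) (W : Finset V) (e : E) : ZMod 3 :=
  (if s e ∈ W then 1 else 0) - (if t e ∈ W then 1 else 0)

lemma sum_bd3 (s t : E → V) (g : E → ZMod 3) (X : Finset V) :
    ∑ v ∈ X, bd s t g v = ∑ e, sgn s t X e * g e := by
  rw [sum_bd]
  refine Finset.sum_congr rfl fun e _ => ?_
  rw [sgn]; split_ifs <;> simp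

/-- Two edges `e₁, e₂` across the boundary of `W`, each with two admissible values, give enough
freedom to prescribe the total boundary over `W` while avoiding `h` on the edges in `new`. -/
lemma exists_avoid (s t : E → V) (W : Finset V) (new : E → Prop) (e₁ e₂ : E) (hne : e₁ ≠ e₂)
    (hnew₁ : new e₁) (hnew₂ : new e₂)
    (hs₁ : sgn s t W e₁ = 1 ∨ sgn s t W e₁ = -1) (hs₂ : sgn s t W e₂ = 1 ∨ sgn s t W e₂ = -1)
    (h : E → ZMod 3) (β : V → ZMod 3) :
    ∃ φ₁ : E → ZMod 3, (∀ e, new e → φ₁ e ≠ h e) ∧ (∀ e, ¬ new e → φ₁ e = 0) ∧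
      ∑ v ∈ W, (β v - bd s t φ₁ v) = 0 := by
  obtain ⟨φ₀, hφ₀, hφ₀'⟩ : ∃ φ₀ : E → ZMod 3, (∀ e, new e → φ₀ e = h e + 1) ∧
      ∀ e, ¬ new e → φ₀ e = 0 :=
    ⟨fun e => if new e then h e + 1 else 0, fun e he => if_pos he, fun e he => if_neg he⟩
  obtain ⟨a₁, a₂, ha₁, ha₂, ha⟩ : ∃ a₁ a₂ : ZMod 3, a₁ ≠ 2 ∧ a₂ ≠ 2 ∧
      sgn s t W e₁ * a₁ + sgn s t W e₂ * a₂ = ∑ v ∈ W, (β v - bd s t φ₀ v) := by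
    generalize ∑ v ∈ W, (β v - bd s t φ₀ v) = τ
    have : ∀ a b τ : ZMod 3, (a = 1 ∨ a = -1) → (b = 1 ∨ b = -1) → ∃ a₁ a₂ : ZMod 3,
      a₁ ≠ 2 ∧ a₂ ≠ 2 ∧ a * a₁ + b * a₂ = τ := by decide
    exact this _ _ τ hs₁ hs₂
  refine ⟨φ₀ + Pi.single e₁ a₁ + Pi.single e₂ a₂, fun e he => ?_, fun e he => ?_, ?_⟩
  · have aux : ∀ y a : ZMod 3, a ≠ 2 → y + 1 + a ≠ y := by decide
    by_cases h1 : e = e₁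
    · subst h1; simpa [hφ₀ _ he, hne] using aux (h e) _ ha₁
    · by_cases h2 : e = e₂
      · subst h2; simpa [hφ₀ _ he, h1] using aux (h e) _ ha₂
      · simp [hφ₀ _ he, h1, h2]
  · have h1 : e ≠ e₁ := fun h => he (h ▸ hnew₁)
    have h2 : e ≠ e₂ := fun h => he (h ▸ hnew₂)
    simp [hφ₀' _ he, h1, h2]
  · have : ∑ v ∈ W, (β v - bd s t (φ₀ + Pi.single e₁ a₁ + Pi.single e₂ a₂) v) =
        ∑ v ∈ W, (β v - bd s t φ₀ v) -
        (∑ v ∈ W, bd s t (Pi.single e₁ a₁) v + ∑ v ∈ W, bd s t (Pi.single e₂ a₂) v) := by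
      rw [← Finset.sum_add_distrib, ← Finset.sum_sub_distrib]
      refine Finset.sum_congr rfl fun v _ => ?_
      simp only [bd_add, Pi.add_apply]
      abel
    rw [this, ← ha, sum_bd3, sum_bd3]
    simp [Pi.single_apply]

/-- If `F` connects `W`, every zero-sum boundary on `W` is realised on `F`. -/
lemma exists_tree (s t : E → V) (W : Finset V) (F : E → Prop) (x : V)
    (hconn : ∀ z ∈ W, ∃ ψ : E → ZMod 3, (∀ e, ψ e ≠ 0 → F e) ∧
      bd s t ψ = Pi.single x 1 - Pi.single z 1) (β₁ : V → ZMod 3) (hβ₁W : ∑ v ∈ W, β₁ v = 0) :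
    ∃ Ψ : E → ZMod 3, (∀ e, Ψ e ≠ 0 → F e) ∧
      ∀ v, bd s t Ψ v = if v ∈ W then β₁ v else 0 := by
  choose! ψ hψ hbψ using hconn
  refine ⟨∑ z ∈ W, fun e => - β₁ z * ψ z e, ?_, ?_⟩
  · intro e he
    by_contra h0
    refine he ?_
    simp only [Finset.sum_apply]
    refine Finset.sum_eq_zero fun z hz => ?_
    have : ψ z e = 0 := by
      by_contra h1; exact h0 (hψ z hz e h1)
    simp [this]
  · intro v
    rw [bd_sum, Finset.sum_apply]
    have : ∀ z ∈ W, bd s t (fun e => - β₁ z * ψ z e) v =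
        (if v = z then β₁ z else 0) - β₁ z * (if v = x then 1 else 0) := by
      intro z hz
      have := bd_map (AddMonoidHom.mulLeft (- β₁ z)) s t (ψ z) v
      simp only [AddMonoidHom.coe_mulLeft] at this
      rw [this, hbψ z hz]
      simp only [Pi.sub_apply, Pi.single_apply]
      split_ifs <;> ring
    rw [Finset.sum_congr rfl this, Finset.sum_sub_distrib, ← Finset.sum_mul, hβ₁W]
    simp

/-- A good set `U` can be enlarged by a set `W` which is joined to it by two edges and is connected
by the support of a `ℤ₂`-flow `c'` inside `W`. -/
lemma step [Fintype V] (s t : E → V) (U W : Finset V) (hd : Disjoint U W)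
    (hU : GoodSet s t U) (x : V) (c' : E → ZMod 2)
    (hc' : ∀ e, c' e ≠ 0 → s e ∈ W ∧ t e ∈ W) (hbc' : bd s t c' = 0)
    (hconn : ∀ z ∈ W, ∃ ψ : E → ZMod 3, (∀ e, ψ e ≠ 0 → c' e ≠ 0) ∧
      bd s t ψ = Pi.single x 1 - Pi.single z 1)
    (e₁ e₂ : E) (hne : e₁ ≠ e₂)
    (h₁ : (s e₁ ∈ U ∧ t e₁ ∈ W) ∨ (s e₁ ∈ W ∧ t e₁ ∈ U))
    (h₂ : (s e₂ ∈ U ∧ t e₂ ∈ W) ∨ (s e₂ ∈ W ∧ t e₂ ∈ U)) :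
    GoodSet s t (U ∪ W) := by
  obtain ⟨c, hc, hbc, hsolve⟩ := hU
  have hUW : ∀ v, v ∈ U → v ∉ W := fun v h1 h2 => Finset.disjoint_left.1 hd h1 h2
  refine ⟨c + c', fun e he => ?_, by rw [bd_add, hbc, hbc', add_zero], fun h β hβ hsum => ?_⟩
  · by_cases h0 : c e = 0
    · have := hc' e (by simpa [h0] using he)
      exact ⟨Finset.mem_union_right _ this.1, Finset.mem_union_right _ this.2⟩
    · have := hc e h0
      exact ⟨Finset.mem_union_left _ this.1, Finset.mem_union_left _ this.2⟩
  -- `new e` : the edge is inside `U ∪ W`, not inside `U`, and not on the support of `c'`.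
  let new : E → Prop := fun e => (s e ∈ U ∪ W ∧ t e ∈ U ∪ W) ∧ ¬ (s e ∈ U ∧ t e ∈ U) ∧ c' e = 0
  have hcross : ∀ e, (s e ∈ U ∧ t e ∈ W) ∨ (s e ∈ W ∧ t e ∈ U) →
      new e ∧ (sgn s t W e = 1 ∨ sgn s t W e = -1) := by
    rintro e (⟨h1, h2⟩ | ⟨h1, h2⟩)
    · refine ⟨⟨⟨Finset.mem_union_left _ h1, Finset.mem_union_right _ h2⟩,
        fun h3 => hUW _ h3.2 h2, ?_⟩, Or.inr ?_⟩
      · by_contra h0; exact hUW _ h1 (hc' _ h0).1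
      · simp [sgn, h2, hUW _ h1]
    · refine ⟨⟨⟨Finset.mem_union_right _ h1, Finset.mem_union_left _ h2⟩,
        fun h3 => hUW _ h3.1 h1, ?_⟩, Or.inl ?_⟩
      · by_contra h0; exact hUW _ h2 (hc' _ h0).2
      · simp [sgn, h1, hUW _ h2]
  obtain ⟨φ₁, hφ₁new, hφ₁old, hβ₁W'⟩ :=
    exists_avoid s t W new e₁ e₂ hne (hcross _ h₁).1 (hcross _ h₂).1
      (hcross _ h₁).2 (hcross _ h₂).2 h β
  obtain ⟨β₁, hβ₁⟩ : ∃ β₁ : V → ZMod 3, ∀ v, β₁ v = β v - bd s t φ₁ v := ⟨_, fun _ => rfl⟩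
  have hβ₁W : ∑ v ∈ W, β₁ v = 0 := by simpa only [hβ₁] using hβ₁W'
  have hβ₁out : ∀ v, v ∉ U ∪ W → β₁ v = 0 := by
    intro v hv
    have : bd s t φ₁ v = 0 := by
      refine Finset.sum_eq_zero fun e _ => ?_
      by_cases he : new e
      · have h1 : s e ≠ v := by rintro rfl; exact hv he.1.1
        have h2 : t e ≠ v := by rintro rfl; exact hv he.1.2
        simp [h1, h2]
      · simp [hφ₁old e he]
    simp [hβ₁, this, hβ v hv]
  obtain ⟨Ψ, hΨ, hbΨ⟩ := exists_tree s t W (fun e => c' e ≠ 0) x hconn β₁ hβ₁W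
  -- What remains of the boundary lives on `U`, where goodness of `U` applies.
  obtain ⟨φ₂, hφ₂, hbφ₂, hφ₂h⟩ := hsolve h (fun v => if v ∈ U then β₁ v else 0)
    (fun v hv => by simp [hv]) (by
      have h1 : ∑ v, β₁ v = 0 := by
        simp only [hβ₁, Finset.sum_sub_distrib, hsum, sum_bd_univ, sub_zero]
      have h2 : ∑ v, β₁ v = ∑ v ∈ U ∪ W, β₁ v :=
        (Finset.sum_subset (Finset.subset_univ _) fun v _ hv => hβ₁out v hv).symm
      rw [Finset.sum_union hd, hβ₁W, add_zero, h1] at h2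
      rw [Finset.sum_ite_mem, Finset.univ_inter, ← h2])
  refine ⟨φ₁ + Ψ + φ₂, fun e he => ?_, ?_, fun e h1 h2 h3 => ?_⟩
  · by_contra hout
    have h1 : φ₁ e = 0 := hφ₁old e fun h => hout h.1
    have h2 : Ψ e = 0 := by
      by_contra h2
      have := hc' e (hΨ e h2)
      exact hout ⟨Finset.mem_union_right _ this.1, Finset.mem_union_right _ this.2⟩
    have h3 : φ₂ e = 0 := by
      by_contra h3
      have := hφ₂ e h3
      exact hout ⟨Finset.mem_union_left _ this.1, Finset.mem_union_left _ this.2⟩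
    simp [h1, h2, h3] at he
  · funext v
    rw [bd_add, bd_add, Pi.add_apply, Pi.add_apply, hbΨ, hbφ₂]
    have h1 : bd s t φ₁ v = β v - β₁ v := by simp [hβ₁]
    rw [h1]
    by_cases hvU : v ∈ U
    · simp [hvU, hUW v hvU]
    · by_cases hvW : v ∈ W
      · simp [hvU, hvW]
      · simp [hvU, hvW, hβ₁out v (by simp [hvU, hvW])]
  · by_cases hin : s e ∈ U ∧ t e ∈ U
    · have h4 : c' e = 0 := by
        by_contra h4; exact hUW _ hin.1 (hc' e h4).1
      have h5 : φ₁ e = 0 := hφ₁old e fun h => h.2.1 hin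
      have h6 : Ψ e = 0 := by
        by_contra h6; exact hΨ e h6 h4
      simpa [h5, h6] using hφ₂h e hin.1 hin.2 (by simpa [h4] using h3)
    · have h4 : c e = 0 := by
        by_contra h4; exact hin (hc e h4)
      have h5 : c' e = 0 := by simpa [h4] using h3
      have h6 : Ψ e = 0 := by
        by_contra h6; exact hΨ e h6 h5
      have h7 : φ₂ e = 0 := by
        by_contra h7; exact hin (hφ₂ e h7)
      simpa [h6, h7] using hφ₁new e ⟨⟨h1, h2⟩, hin, h5⟩

/-! ### Connected even subgraphs and enlarging good sets -/

/-- One step of max-flow min-cut with unit capacities inside `B`: the value `m ≤ 1` of a flow from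
`x` to `y` can be raised by one, as an obstruction would be a saturated
cut of size `m`, whereas all cuts have size at least `2`. -/
lemma augment [Fintype V] (s t : E → V) (B : Finset V) (x y : V) (hx : x ∈ B)
    (hcut : ∀ S ⊆ B, x ∈ S → y ∉ S →
      2 ≤ ((cut s t S).filter fun e => s e ∈ B ∧ t e ∈ B).card)
    (m : ℤ) (hm : m ≤ 1) (g : E → ℤ)
    (hg : ∀ e, |g e| ≤ 1 ∧ (g e ≠ 0 → s e ∈ B ∧ t e ∈ B))
    (hb : bd s t g = Pi.single x m - Pi.single y m) :
    ∃ g : E → ℤ, (∀ e, |g e| ≤ 1 ∧ (g e ≠ 0 → s e ∈ B ∧ t e ∈ B)) ∧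
      bd s t g = Pi.single x (m + 1) - Pi.single y (m + 1) := by
  obtain ⟨S, hxS, hS, hout, hin⟩ :=
    grow s t (fun e v => |v| ≤ 1 ∧ (v ≠ 0 → s e ∈ B ∧ t e ∈ B)) 1 g hg x
  by_cases hy : y ∈ S
  · obtain ⟨g', hg', -, hb'⟩ := hS y hy
    refine ⟨g', hg', ?_⟩
    rw [hb', hb, Pi.single_add, Pi.single_add]; abel
  exfalso
  have h2 := hcut (S ∩ B) Finset.inter_subset_right (Finset.mem_inter.2 ⟨hxS, hx⟩)
    (fun h => hy (Finset.mem_inter.1 h).1)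
  have h3 : ∑ v ∈ S, bd s t g v = m := by
    rw [hb]
    simp [Pi.single_apply, hxS, hy]
  have h4 : (((cut s t (S ∩ B)).filter fun e => s e ∈ B ∧ t e ∈ B).card : ℤ) ≤
      ∑ v ∈ S, bd s t g v := by
    rw [sum_bd, cut, Finset.filter_filter, Finset.card_filter]
    push_cast
    refine Finset.sum_le_sum fun e _ => ?_
    have h5 := hg e
    have h6 := hout e
    have h7 := hin e
    simp only [abs_le] at h5 h6 h7
    simp only [Finset.mem_inter]
    by_cases hB : s e ∈ B ∧ t e ∈ B
    · by_cases hs : s e ∈ S <;> by_cases ht : t e ∈ S <;>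
        simp only [hs, ht, hB, not_true, not_false_iff, and_true,
          forall_const, implies_true, if_true, if_false, iff_true, iff_false,
          IsEmpty.forall_iff, not_and, and_self] at h6 h7 ⊢ <;> omega
    · have h8 : g e = 0 := by by_contra h8; exact hB (h5.2 h8)
      simp [h8, hB]
  omega

lemma two_flow [Fintype V] (s t : E → V) (B : Finset V) (x y : V) (hx : x ∈ B)
    (hcut : ∀ S ⊆ B, x ∈ S → y ∉ S →
      2 ≤ ((cut s t S).filter fun e => s e ∈ B ∧ t e ∈ B).card) :
    ∃ g : E → ℤ, (∀ e, |g e| ≤ 1 ∧ (g e ≠ 0 → s e ∈ B ∧ t e ∈ B)) ∧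
      bd s t g = Pi.single x 2 - Pi.single y 2 := by
  obtain ⟨g, hg, hb⟩ := augment s t B x y hx hcut 0 (by norm_num) 0 (by simp)
    (by rw [bd_zero]; simp)
  exact augment s t B x y hx hcut 1 le_rfl g hg hb

/-- In a graph on `B` without cuts of size less than `2` between `x` and `y`, some connected even
subgraph contains `x` and `y`: it is the component of `x` in the support of an `x`-`y` flow of
value `2`. -/
lemma even_conn [Fintype V] (s t : E → V) (B : Finset V) (x y : V) (hx : x ∈ B)
    (hcut : ∀ S ⊆ B, x ∈ S → y ∉ S →
      2 ≤ ((cut s t S).filter fun e => s e ∈ B ∧ t e ∈ B).card) :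
    ∃ W ⊆ B, x ∈ W ∧ y ∈ W ∧ ∃ c' : E → ZMod 2,
      (∀ e, c' e ≠ 0 → s e ∈ W ∧ t e ∈ W) ∧ bd s t c' = 0 ∧
      ∀ z ∈ W, ∃ ψ : E → ZMod 3, (∀ e, ψ e ≠ 0 → c' e ≠ 0) ∧
        bd s t ψ = Pi.single x 1 - Pi.single z 1 := by
  obtain ⟨g, hg, hb⟩ := two_flow s t B x y hx hcut
  obtain ⟨W, hxW, hW, hout, hin⟩ :=
    grow s t (fun e (v : ZMod 3) => v ≠ 0 → g e ≠ 0) 1 0 (by simp) x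
  have hcr : ∀ e, g e ≠ 0 → (s e ∈ W ↔ t e ∈ W) := by
    intro e he
    have h1 := hout e
    have h2 := hin e
    simp only [he, ne_eq, not_false_iff, implies_true, not_true] at h1 h2
    tauto
  -- No flow leaves `W`, so the boundary sums to zero over `W`; this fails if `y ∉ W`.
  have hyW : y ∈ W := by
    by_contra hy
    have h3 : ∑ v ∈ W, bd s t g v = 2 := by
      rw [hb]
      simp [Pi.single_apply, hxW, hy]
    rw [sum_bd, Finset.sum_eq_zero] at h3
    · norm_num at h3
    · intro e _
      by_cases he : g e = 0
      · simp [he]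
      · simp [hcr e he]
  have hWB : W ⊆ B := by
    intro z hz
    by_contra hzB
    obtain ⟨ψ, h1, -, h2⟩ := hW z hz
    have hzx : z ≠ x := by rintro rfl; exact hzB hx
    have h3 : bd s t ψ z = 0 := by
      refine Finset.sum_eq_zero fun e _ => ?_
      by_cases he : ψ e = 0
      · simp [he]
      · have h4 := (hg e).2 (h1 e he)
        have h5 : s e ≠ z := by rintro rfl; exact hzB h4.1
        have h6 : t e ≠ z := by rintro rfl; exact hzB h4.2
        simp [h5, h6]
    rw [h2, bd_zero] at h3
    simp [hzx] at h3
  refine ⟨W, hWB, hxW, hyW, fun e => if s e ∈ W then (g e : ZMod 2) else 0, ?_, ?_, ?_⟩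
  · intro e he
    by_cases hs : s e ∈ W
    · refine ⟨hs, (hcr e fun h0 => he ?_).1 hs⟩
      simp [h0]
    · simp [hs] at he
  · funext v
    by_cases hv : v ∈ W
    · have h1 : bd s t (fun e => if s e ∈ W then (g e : ZMod 2) else 0) v =
          bd s t (fun e => Int.castAddHom (ZMod 2) (g e)) v := by
        refine Finset.sum_congr rfl fun e _ => ?_
        by_cases hs : s e ∈ W
        · simp [hs]
        · by_cases h0 : g e = 0
          · simp [h0]
          · have h5 : s e ≠ v := by rintro rfl; exact hs hv
            have h6 : t e ≠ v := by rintro rfl; exact hs ((hcr e h0).2 hv)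
            simp [h5, h6]
      rw [h1, bd_map, hb]
      have h2 : (2 : ZMod 2) = 0 := by decide
      rw [Pi.sub_apply, Pi.single_apply, Pi.single_apply, map_sub, Int.coe_castAddHom]
      split_ifs <;> simp [h2]
    · refine Finset.sum_eq_zero fun e _ => ?_
      by_cases hs : s e ∈ W
      · by_cases h0 : g e = 0
        · simp [h0]
        · have h5 : s e ≠ v := by rintro rfl; exact hv hs
          have h6 : t e ≠ v := by rintro rfl; exact hv ((hcr e h0).1 hs)
          simp [h5, h6]
      · simp [hs]
  · intro z hz
    obtain ⟨ψ, h1, h2, h3⟩ := hW z hz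
    refine ⟨ψ, fun e he => ?_, by rw [h3, bd_zero, zero_add]⟩
    have h4 : s e ∈ W := by
      by_contra h4
      exact he (h2 e (Or.inl h4))
    have h5 := h1 e he
    have h6 := abs_le.1 (hg e).1
    change (if s e ∈ W then (g e : ZMod 2) else 0) ≠ 0
    rw [if_pos h4]
    have h7 : g e = 1 ∨ g e = -1 := by omega
    rcases h7 with h7 | h7 <;> rw [h7] <;> decide

/-- Counting the cuts of `S`, `B \ S` and `B` in `G - U`: edges between `S` and `B \ S` count twice. -/
lemma cut_count (s t : E → V) (U B S : Finset V) (hS : S ⊆ B) :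
    ((cut s t S).filter fun e => s e ∉ U ∧ t e ∉ U).card +
      ((cut s t (B \ S)).filter fun e => s e ∉ U ∧ t e ∉ U).card ≤
    2 * ((cut s t S).filter fun e => s e ∈ B ∧ t e ∈ B).card +
      ((cut s t B).filter fun e => s e ∉ U ∧ t e ∉ U).card := by
  have aux : ∀ (a₁ a₂ b₁ b₂ u₁ u₂ : Prop) [Decidable a₁] [Decidable a₂]
      [Decidable b₁] [Decidable b₂] [Decidable u₁] [Decidable u₂], (a₁ → b₁) → (a₂ → b₂) →
      (if ¬ (a₁ ↔ a₂) ∧ ¬ u₁ ∧ ¬ u₂ then 1 else 0) +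
        (if ¬ (b₁ ∧ ¬ a₁ ↔ b₂ ∧ ¬ a₂) ∧ ¬ u₁ ∧ ¬ u₂ then 1 else 0) ≤
      2 * (if ¬ (a₁ ↔ a₂) ∧ b₁ ∧ b₂ then 1 else 0) +
        (if ¬ (b₁ ↔ b₂) ∧ ¬ u₁ ∧ ¬ u₂ then 1 else 0) := by
    intro a₁ a₂ b₁ b₂ u₁ u₂ _ _ _ _ _ _ h₁ h₂
    by_cases hu : ¬ u₁ ∧ ¬ u₂
    · by_cases a₁ <;> by_cases a₂ <;> by_cases b₁ <;> by_cases b₂ <;> simp_all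
    · simp [hu]
  simp only [cut, Finset.filter_filter, Finset.card_filter, Finset.mul_sum,
    ← Finset.sum_add_distrib, Finset.mem_sdiff]
  exact Finset.sum_le_sum fun e _ => aux _ _ _ _ _ _ (@hS (s e)) (@hS (t e))

/-- In a 3-edge-connected graph a good set other than `V` can be enlarged. The set `B` is a minimal
one left by at most one edge of `G - U`, so its proper subsets are left by at least two. -/
lemma extend [Fintype V] (s t : E → V)
    (h3 : ∀ X : Finset V, X.Nonempty → X ≠ Finset.univ → 3 ≤ (cut s t X).card)
    (U : Finset V) (hUne : U.Nonempty) (hUuniv : U ≠ Finset.univ) (hU : GoodSet s t U) :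
    ∃ U', U ⊂ U' ∧ GoodSet s t U' := by
  -- the cut of `B` in `G - U`
  let d' : Finset V → Finset E := fun B => (cut s t B).filter fun e => s e ∉ U ∧ t e ∉ U
  have hP : ∃ B : Finset V, B.Nonempty ∧ Disjoint U B ∧ (d' B).card ≤ 1 := by
    refine ⟨Uᶜ, ?_, disjoint_compl_right, ?_⟩
    · rw [Finset.nonempty_iff_ne_empty, ne_eq, Finset.compl_eq_empty_iff]; exact hUuniv
    · have : d' Uᶜ = ∅ := by
        ext e; simp only [d', cut, Finset.mem_filter, Finset.mem_compl]; simp; tauto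
      simp [this]
  obtain ⟨B, hB⟩ :=
    (Set.toFinite {B : Finset V | B.Nonempty ∧ Disjoint U B ∧ (d' B).card ≤ 1}).exists_minimal hP
  obtain ⟨⟨hBne, hUB, hdB⟩, hmin⟩ := hB
  have hUB' : ∀ v, v ∈ B → v ∉ U := fun v h1 h2 => Finset.disjoint_left.1 hUB h2 h1
  have hmin' : ∀ S ⊆ B, S.Nonempty → S ≠ B → 2 ≤ (d' S).card := by
    intro S hS hSne hSB
    by_contra hlt
    exact hSB (hS.antisymm (hmin ⟨hSne, hUB.mono_right hS, by omega⟩ hS))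
  have hBuniv : B ≠ Finset.univ := by
    rintro rfl
    obtain ⟨u, hu⟩ := hUne
    exact hUB' u (Finset.mem_univ u) hu
  have hcross : 1 < ((cut s t B).filter fun e => ¬ (s e ∉ U ∧ t e ∉ U)).card := by
    have h4 := h3 B hBne hBuniv
    rw [← Finset.card_filter_add_card_filter_not (fun e => s e ∉ U ∧ t e ∉ U)] at h4
    have : (d' B).card ≤ 1 := hdB
    simp only [d'] at this
    omega
  obtain ⟨e₁, he₁, e₂, he₂, hne⟩ := Finset.one_lt_card.1 hcross
  have hends : ∀ e ∈ (cut s t B).filter (fun e => ¬ (s e ∉ U ∧ t e ∉ U)),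
      ∃ x ∈ B, (s e ∈ U ∧ t e = x) ∨ (s e = x ∧ t e ∈ U) := by
    intro e he
    simp only [cut, Finset.mem_filter, Finset.mem_univ, true_and] at he
    have h1 := hUB' (s e)
    have h2 := hUB' (t e)
    by_cases hs : s e ∈ B
    · exact ⟨s e, hs, by tauto⟩
    · exact ⟨t e, by tauto, by tauto⟩
  obtain ⟨x, hx, hxe⟩ := hends e₁ he₁
  obtain ⟨y, hy, hye⟩ := hends e₂ he₂
  obtain ⟨W, hWB, hxW, hyW, c', hc', hbc', hconn⟩ : ∃ W ⊆ B, x ∈ W ∧ y ∈ W ∧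
      ∃ c' : E → ZMod 2,
      (∀ e, c' e ≠ 0 → s e ∈ W ∧ t e ∈ W) ∧ bd s t c' = 0 ∧
      ∀ z ∈ W, ∃ ψ : E → ZMod 3, (∀ e, ψ e ≠ 0 → c' e ≠ 0) ∧
        bd s t ψ = Pi.single x 1 - Pi.single z 1 := by
    by_cases hxy : x = y
    · subst hxy
      refine ⟨{x}, by simpa using hx, by simp, by simp, 0, by simp, bd_zero s t, ?_⟩
      intro z hz
      rw [Finset.mem_singleton] at hz
      subst hz
      exact ⟨0, by simp, by rw [bd_zero]; simp⟩
    · refine even_conn s t B x y hx fun S hS hxS hyS => ?_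
      have h1 := hmin' S hS ⟨x, hxS⟩ (by rintro rfl; exact hyS hy)
      have h2 := hmin' (B \ S) Finset.sdiff_subset ⟨y, by simp [hy, hyS]⟩
        (fun h => by have := h.symm ▸ hx; simp [hxS] at this)
      have h4 := cut_count s t U B S hS
      simp only [d'] at h1 h2 hdB
      omega
  have hends' : ∀ e z, z ∈ W → ((s e ∈ U ∧ t e = z) ∨ (s e = z ∧ t e ∈ U)) →
      (s e ∈ U ∧ t e ∈ W) ∨ (s e ∈ W ∧ t e ∈ U) := by
    rintro e z hz (⟨h1, rfl⟩ | ⟨rfl, h1⟩)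
    · exact Or.inl ⟨h1, hz⟩
    · exact Or.inr ⟨hz, h1⟩
  refine ⟨U ∪ W, ?_, step s t U W (hUB.mono_right hWB) hU x c' hc' hbc' hconn e₁ e₂ hne
    (hends' _ _ hxW hxe) (hends' _ _ hyW hye)⟩
  exact Finset.ssubset_iff_subset_ne.2 ⟨Finset.subset_union_left, fun h => hUB' x hx
    (h ▸ Finset.mem_union_right U hxW)⟩

/-- The 3-edge-connected case: the whole vertex set is good. -/
lemma flow_of_three [Fintype V] [Nonempty V] (s t : E → V)
    (h3 : ∀ X : Finset V, X.Nonempty → X ≠ Finset.univ → 3 ≤ (cut s t X).card) :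
    ∃ φ : E → ZMod 2 × ZMod 3, (∀ e, φ e ≠ 0) ∧ bd s t φ = 0 := by
  obtain ⟨r⟩ := ‹Nonempty V›
  obtain ⟨U, ⟨hUne, hU⟩, hmax⟩ :=
    (Set.toFinite {U : Finset V | U.Nonempty ∧ GoodSet s t U}).exists_maximal
      ⟨{r}, Finset.singleton_nonempty r, goodSet_singleton s t r⟩
  have huniv : U = Finset.univ := by
    by_contra hne
    obtain ⟨U', hss, hU'⟩ := extend s t h3 U hUne hne hU
    exact hss.2 (hmax ⟨hUne.mono hss.1, hU'⟩ hss.1)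
  subst huniv
  obtain ⟨c, -, hbc, hsolve⟩ := hU
  obtain ⟨φ, -, hbφ, hφ⟩ := hsolve 0 0 (by simp) (by simp)
  refine ⟨fun e => (c e, φ e), fun e h0 => ?_, funext fun v => ?_⟩
  · rw [Prod.mk_eq_zero] at h0
    exact hφ e (Finset.mem_univ _) (Finset.mem_univ _) h0.1 h0.2
  · refine Prod.ext ?_ ?_
    · exact (bd_map (AddMonoidHom.fst (ZMod 2) (ZMod 3)) s t _ v).symm.trans (congrFun hbc v)
    · exact (bd_map (AddMonoidHom.snd (ZMod 2) (ZMod 3)) s t _ v).symm.trans (congrFun hbφ v)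

/-! ### Two-edge-connected graphs -/

/-- The 2-edge-connected case, by contracting an edge of a 2-edge cut. The edge set is kept, so that
the contracted edge, and any parallel to it, becomes a loop. -/
lemma flow_of_two (n : ℕ) : ∀ (V : Type) [Fintype V] [Nonempty V] (s t : E → V),
    Fintype.card V = n →
    (∀ X : Finset V, X.Nonempty → X ≠ Finset.univ → 2 ≤ (cut s t X).card) →
    ∃ φ : E → ZMod 2 × ZMod 3, (∀ e, φ e ≠ 0) ∧ bd s t φ = 0 := by
  induction n using Nat.strong_induction_on with
  | _ n ih =>
  intro V _ _ s t hn h2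
  by_cases h3 : ∀ X : Finset V, X.Nonempty → X ≠ Finset.univ → 3 ≤ (cut s t X).card
  · exact flow_of_three s t h3
  push Not at h3
  obtain ⟨X, hXne, hXu, hX⟩ := h3
  have hX2 : (cut s t X).card = 2 := by have := h2 X hXne hXu; omega
  obtain ⟨e, f, hef, hcut⟩ := Finset.card_eq_two.1 hX2
  have hmem : ∀ d, ¬ (s d ∈ X ↔ t d ∈ X) ↔ d = e ∨ d = f := by
    intro d
    have : d ∈ cut s t X ↔ d ∈ ({e, f} : Finset E) := by rw [hcut]
    simpa [cut] using this
  have hab : s e ≠ t e := fun h => (hmem e).2 (Or.inl rfl) (by rw [h])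
  -- `π` contracts `e`, identifying `t e` with `s e`.
  let π : V → {v : V // v ≠ t e} := fun v => if h : v = t e then ⟨s e, hab⟩ else ⟨v, h⟩
  have hπ : ∀ v (h : v ≠ t e), π v = ⟨v, h⟩ := fun v h => dif_neg h
  have hπ' : ∀ v w (h : w ≠ t e), w ≠ s e → (π v = ⟨w, h⟩ ↔ v = w) := by
    intro v w h hw
    by_cases hv : v = t e
    · have : π v = ⟨s e, hab⟩ := dif_pos hv
      rw [this, hv]
      simp [hw.symm, h.symm]
    · rw [hπ v hv]; simp
  have : Nonempty {v : V // v ≠ t e} := ⟨⟨s e, hab⟩⟩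
  obtain ⟨φ, hφ, hbφ⟩ := ih (Fintype.card {v : V // v ≠ t e})
    (hn ▸ Fintype.card_subtype_lt (x := t e) (by simp)) {v : V // v ≠ t e}
    (fun d => π (s d)) (fun d => π (t d)) rfl (by
      intro Y hYne hYu
      have := h2 (Finset.univ.filter fun v => π v ∈ Y) (by
          obtain ⟨y, hy⟩ := hYne
          exact ⟨y.1, by simpa [hπ y.1 y.2] using hy⟩)
        (fun h => hYu (by
          ext y
          have : y.1 ∈ Finset.univ.filter fun v => π v ∈ Y := by rw [h]; simp
          simpa [hπ y.1 y.2] using this))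
      simpa [cut] using this)
  have hb : ∀ v, v ≠ s e → v ≠ t e → bd s t φ v = 0 := by
    intro v h1 h2
    have h3 := congrFun hbφ ⟨v, h2⟩
    simpa only [bd, hπ' _ v h2 h1, Pi.zero_apply] using h3
  have hbab : bd s t φ (t e) = - bd s t φ (s e) := by
    have h1 := sum_bd_univ s t φ
    rw [← Finset.sum_subset (Finset.subset_univ {s e, t e}) (fun v _ hv => by
      simp only [Finset.mem_insert, Finset.mem_singleton, not_or] at hv
      exact hb v hv.1 hv.2), Finset.sum_pair hab] at h1
    exact (neg_eq_of_add_eq_zero_right h1).symm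
  have hb2 : bd s t (φ + Pi.single e (- bd s t φ (s e))) = 0 := by
    funext v
    rw [bd_add, bd_single]
    by_cases h1 : v = s e
    · subst h1; simp [hab]
    · by_cases h2 : v = t e
      · subst h2; simp [hab.symm, hbab]
      · simp [h1, h2, hb v h1 h2]
  refine ⟨_, fun d => ?_, hb2⟩
  by_cases hde : d = e
  · subst hde
    intro h0
    -- if the value on `e` vanished, conservation across `X` would make it vanish on `f`
    have h1 := sum_bd s t (φ + Pi.single d (- bd s t φ (s d))) X
    rw [hb2, Finset.sum_eq_single f] at h1
    · have h4 : (φ + Pi.single d (- bd s t φ (s d)) : E → ZMod 2 × ZMod 3) f = φ f := by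
        simp [hef.symm]
      have h5 := (hmem f).2 (Or.inr rfl)
      have h6 := hφ f
      rw [h4] at h1
      by_cases a1 : s f ∈ X <;> by_cases a2 : t f ∈ X <;> simp_all
    · intro b _ hbf
      by_cases hbd : b = d
      · subst hbd; simp only [h0, ite_self, sub_self]
      · have h7 : s b ∈ X ↔ t b ∈ X := by
          by_contra h7
          rcases (hmem b).1 h7 with h | h
          · exact hbd h
          · exact hbf h
        simp only [h7, sub_self]
    · simp
  · simpa [hde] using hφ d

lemma int_of_two [Fintype V] [Nonempty V] (s t : E → V)
    (h2 : ∀ X : Finset V, X.Nonempty → X ≠ Finset.univ → 2 ≤ (cut s t X).card) :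
    ∃ g : E → ℤ, (∀ e, g e ≠ 0 ∧ |g e| < 6) ∧ bd s t g = 0 := by
  obtain ⟨φ, hφ, hb⟩ := flow_of_two (E := E) _ V s t rfl h2
  -- The values `3 a + 2 b` with `a ∈ {0, 1}` and `b ∈ {-1, 0, 1}` lie strictly between `-6` and `6`.
  let lift : ZMod 2 × ZMod 3 → ℤ := fun p => 3 * (p.1.val : ℤ) + 2 * p.2.valMinAbs
  have h1 : ∀ p, p ≠ 0 → lift p ≠ 0 ∧ |lift p| < 6 := by decide
  have hl2 : ∀ p, ((lift p : ℤ) : ZMod 2) = p.1 := by decide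
  have hl3 : ∀ p, ((lift p : ℤ) : ZMod 3) = 2 * p.2 := by decide
  refine int_flow s t _ (fun e => lift (φ e)) (fun e => h1 _ (hφ e)) (fun v => ?_) rfl
  have d2 : (2 : ℤ) ∣ bd s t (fun e => lift (φ e)) v := by
    rw [← Nat.cast_ofNat, ← ZMod.intCast_zmod_eq_zero_iff_dvd]
    have := bd_map (Int.castAddHom (ZMod 2)) s t (fun e => lift (φ e)) v
    refine Eq.trans this.symm ?_
    simp only [Int.coe_castAddHom, hl2]
    have := bd_map (AddMonoidHom.fst (ZMod 2) (ZMod 3)) s t φ v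
    rw [hb] at this
    exact this
  have d3 : (3 : ℤ) ∣ bd s t (fun e => lift (φ e)) v := by
    rw [← Nat.cast_ofNat, ← ZMod.intCast_zmod_eq_zero_iff_dvd]
    have := bd_map (Int.castAddHom (ZMod 3)) s t (fun e => lift (φ e)) v
    refine Eq.trans this.symm ?_
    simp only [Int.coe_castAddHom, hl3]
    have := bd_map ((AddMonoidHom.mulLeft (2 : ZMod 3)).comp
      (AddMonoidHom.snd (ZMod 2) (ZMod 3))) s t φ v
    rw [hb] at this
    simpa using this
  omega

end SixFlow

/-- Seymour: for every `k ≥ 6`, every 2-edge-connected graph has a nowhere-zero `ℤ_k`-flow. -/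
theorem two_edge_connected_nzflow (k : ℕ) (hk : 6 ≤ k)
    (V : Type) [Fintype V] [DecidableEq V]
    (G : SimpleGraph V) (hG : EdgeConnected G 2) :
    HasNZFlow G (fun _ => (0 : ZMod k)) := by
  obtain ⟨hcard, hcut⟩ := hG
  have : Nonempty V := Fintype.card_pos_iff.1 (by omega)
  -- A numbering of the vertices orients every edge from its smaller to its larger end.
  let ι := Fintype.equivFin V
  let P : V × V → Prop := fun p => G.Adj p.1 p.2 ∧ ι p.1 < ι p.2
  obtain ⟨g, hg, hb⟩ := SixFlow.int_of_two (E := {p // P p}) (fun e => e.1.1) (fun e => e.1.2) (by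
    intro X hXne hXu
    refine (hcut X hXne hXu).trans ?_
    rw [cutSize]
    have hP : ∀ p : V × V, G.Adj p.1 p.2 → ¬ ι p.1 < ι p.2 → P p.swap := by
      intro p h1 h2
      refine ⟨h1.symm, lt_of_le_of_ne (not_lt.1 h2) fun h => ?_⟩
      exact h1.ne (ι.injective h).symm
    have hP' : ∀ p : V × V, G.Adj p.1 p.2 → ∃ q : {p // P p}, q.1 = p ∨ q.1 = p.swap := by
      intro p h1
      by_cases h2 : ι p.1 < ι p.2
      · exact ⟨⟨p, h1, h2⟩, Or.inl rfl⟩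
      · exact ⟨⟨p.swap, hP p h1 h2⟩, Or.inr rfl⟩
    have : Nonempty {p // P p} := by
      have h4 := hcut X hXne hXu
      obtain ⟨p, hp⟩ := Finset.card_pos.1 (lt_of_lt_of_le two_pos h4)
      simp only [Finset.mem_filter, Finset.mem_univ, true_and] at hp
      exact ⟨(hP' p hp.1).choose⟩
    choose! F hF using hP'
    refine Finset.card_le_card_of_injOn F ?_ ?_
    · rintro p hp
      simp only [Finset.coe_filter, Finset.mem_univ, true_and, Set.mem_ofPred_eq] at hp
      simp only [SixFlow.cut, Finset.coe_filter, Finset.mem_univ, true_and, Set.mem_ofPred_eq]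
      rcases hF p hp.1 with h | h <;> rw [h] <;> simp [hp.2.1, hp.2.2]
    · intro p hp q hq hpq
      simp only [Finset.coe_filter, Finset.mem_univ, true_and, Set.mem_ofPred_eq] at hp hq
      have hp' := hF p hp.1
      have hq' := hF q hq.1
      rw [hpq] at hp'
      rcases hp' with h | h <;> rcases hq' with h' | h' <;> rw [h] at h'
      · exact h'
      · subst h'; exact absurd hp.2.1 hq.2.2
      · subst h'; exact absurd hq.2.1 hp.2.2
      · exact Prod.swap_injective h')
  let Φ : V → V → ZMod k := fun u v => if h : P (u, v) then (g ⟨(u, v), h⟩ : ZMod k) else 0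
  have hcast : ∀ e, (g e : ZMod k) ≠ 0 := by
    intro e h0
    rw [ZMod.intCast_zmod_eq_zero_iff_dvd] at h0
    refine (hg e).1 (Int.eq_zero_of_abs_lt_dvd h0 ((hg e).2.trans_le ?_))
    exact_mod_cast hk
  have hΦ0 : ∀ u v, ¬ P (u, v) → Φ u v = 0 := fun u v h => dif_neg h
  have hΦ : ∀ u v, P (u, v) → Φ u v ≠ 0 := by
    intro u v h
    simp only [Φ, dif_pos h]
    exact hcast _
  refine ⟨fun u v => Φ u v - Φ v u, fun u v _ => (neg_sub _ _).symm, fun u v huv => ?_,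
    fun u => ?_⟩
  · rcases lt_or_gt_of_ne (ι.injective.ne huv.ne) with h | h
    · have h1 : ¬ P (v, u) := fun h2 => lt_asymm h h2.2
      simpa [hΦ0 v u h1] using hΦ u v ⟨huv, h⟩
    · have h1 : ¬ P (u, v) := fun h2 => lt_asymm h h2.2
      simpa [hΦ0 u v h1] using hΦ v u ⟨huv.symm, h⟩
  · have h1 : ∑ v ∈ Finset.univ.filter (fun v => G.Adj u v), (Φ u v - Φ v u) =
        ∑ v, (Φ u v - Φ v u) := by
      refine Finset.sum_subset (Finset.subset_univ _) fun v _ hv => ?_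
      have hv : ¬ G.Adj u v := by simpa using hv
      rw [hΦ0 u v fun h => hv h.1, hΦ0 v u fun h => hv h.1.symm, sub_zero]
    rw [h1]
    have h2 := SixFlow.bd_map (Int.castAddHom (ZMod k)) (fun e : {p // P p} => e.1.1)
      (fun e => e.1.2) g u
    rw [hb, Pi.zero_apply, map_zero] at h2
    rw [← h2, SixFlow.bd]
    have h3 : ∀ e : {p // P p}, Int.castAddHom (ZMod k) (g e) = Φ e.1.1 e.1.2 := by
      intro e
      simp only [Φ, Prod.mk.eta, dif_pos e.2]
      rfl
    simp only [h3]
    rw [← Finset.sum_subtype (Finset.univ.filter P) (by simp)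
      (fun p : V × V => (if p.1 = u then Φ p.1 p.2 else 0) - (if p.2 = u then Φ p.1 p.2 else 0))]
    rw [Finset.sum_filter_of_ne (p := P), Finset.sum_sub_distrib, Finset.sum_sub_distrib,
      Fintype.sum_prod_type, Fintype.sum_prod_type_right]
    · simp
    · intro p _ hne
      by_contra hp
      exact hne (by simp [hΦ0 p.1 p.2 hp])
end
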